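/- arXiv:2408.05871 — 5 statements merged into one kernel-verified Lean document; each statement's English description precedes it below -/
import Mathlib

section
/- For every convexity space (X, C), if the Radon number satisfies r(X, C) ≤ r for some integer r, then the Helly number satisfies h(X, C) ≤ r − 1. -/
open scoped Classical

universe u

section SetSystems

variable {X : Type*}

/-- A finite family of sets is intersecting if all of its members have a common element. -/
def IsIntersecting (F : Finset (Set X)) : Prop :=
  ∃ x, ∀ K ∈ F, x ∈ K

/-- A convexity space: `∅` and the whole space are convex, convexity is closed under
arbitrary (nonempty) intersections and under unions of (nonempty) chains. -/
def IsConvexitySpace (C : Set (Set X)) : Prop :=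
  ∅ ∈ C ∧ Set.univ ∈ C ∧
    (∀ D ⊆ C, D.Nonempty → ⋂₀ D ∈ C) ∧
    (∀ D ⊆ C, D.Nonempty → IsChain (· ⊆ ·) D → ⋃₀ D ∈ C)

/-- The convex hull of `Y`: intersection of all convex sets containing `Y`. -/
def convHull (C : Set (Set X)) (Y : Set X) : Set X :=
  ⋂₀ {K | K ∈ C ∧ Y ⊆ K}

/-- `Y` admits a Radon partition: a partition into two disjoint parts whose hulls meet. -/
def HasRadonPartition (C : Set (Set X)) (Y : Finset X) : Prop :=
  ∃ A B : Finset X, (↑A ∪ ↑B : Set X) = ↑Y ∧ Disjoint (↑A : Set X) (↑B : Set X) ∧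
    (convHull C ↑A ∩ convHull C ↑B).Nonempty

/-- The Radon number is at most `n`: every finite subset of size at least `n`
admits a Radon partition. -/
def RadonLE (C : Set (Set X)) (n : ℕ) : Prop :=
  ∀ Y : Finset X, n ≤ Y.card → HasRadonPartition C Y

/-- `Y` admits a Tverberg `k`-partition: a partition into `k` pairwise disjoint parts
whose hulls have a common point. -/
def HasTverbergPartition (C : Set (Set X)) (k : ℕ) (Y : Finset X) : Prop :=
  ∃ P : Fin k → Finset X, (⋃ i, (↑(P i) : Set X)) = ↑Y ∧
    (∀ i j, i ≠ j → Disjoint (↑(P i) : Set X) (↑(P j) : Set X)) ∧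
    (⋂ i, convHull C ↑(P i)).Nonempty

/-- A minimally non-intersecting family: not intersecting, but every proper subfamily
obtained by deleting one member is intersecting. -/
def MinNonIntersecting (F : Finset (Set X)) : Prop :=
  ¬ IsIntersecting F ∧ ∀ K ∈ F, IsIntersecting (F.erase K)

/-- The Helly number of the set system `S` is at most `n`. -/
def HellyLE (S : Set (Set X)) (n : ℕ) : Prop :=
  ∀ F : Finset (Set X), ↑F ⊆ S → MinNonIntersecting F → F.card ≤ n

/-- The colorful Helly number of the set system `S` is at most `m`. -/
def ColorfulHellyLE (S : Set (Set X)) (m : ℕ) : Prop :=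
  ∀ F : Fin m → Finset (Set X), (∀ i, ↑(F i) ⊆ S) →
    (∀ K : Fin m → Set X, (∀ i, K i ∈ F i) → (⋂ i, K i).Nonempty) →
    ∃ i, IsIntersecting (F i)

/-- `S` satisfies the fractional Helly property for `k`-tuples with function `β`. -/
def FracHelly (S : Set (Set X)) (k : ℕ) (β : ℝ → ℝ) : Prop :=
  ∀ α ∈ Set.Ioo (0 : ℝ) 1, ∀ F : Finset (Set X), ↑F ⊆ S →
    α * (F.card.choose k : ℝ) ≤
      (((F.powersetCard k).filter (fun G => IsIntersecting G)).card : ℝ) →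
    ∃ G ⊆ F, IsIntersecting G ∧ β α * (F.card : ℝ) ≤ (G.card : ℝ)

/-- The transversal number of the finite family `F` is at most `n`: `F` can be
partitioned into (at most) `n` intersecting subfamilies. -/
def TransversalLE (F : Finset (Set X)) (n : ℕ) : Prop :=
  ∃ P : Fin n → Finset (Set X), (∀ i, P i ⊆ F) ∧ (∀ K ∈ F, ∃! i, K ∈ P i) ∧
    ∀ i, (P i).Nonempty → IsIntersecting (P i)

/-- The fractional transversal number of `F` is at most `t`: there is a finitely supported
fractional transversal of total weight at most `t`. -/
def FracTransversalLE (F : Finset (Set X)) (t : ℝ) : Prop :=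
  ∃ f : X →₀ ℝ, (∀ x, 0 ≤ f x ∧ f x ≤ 1) ∧
    (∀ S ∈ F, 1 ≤ ∑ x ∈ f.support.filter (fun x => x ∈ S), f x) ∧
    (∑ x ∈ f.support, f x) ≤ t

/-- The weak ε-net property: there is a function `g` bounding the transversal number of
every finite subfamily in terms of its fractional transversal number. -/
def WeakEpsNetProp (S : Set (Set X)) : Prop :=
  ∃ g : ℝ → ℕ, ∀ F : Finset (Set X), ↑F ⊆ S → ∀ t : ℝ,
    FracTransversalLE F t → (∀ s : ℝ, FracTransversalLE F s → t ≤ s) →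
    TransversalLE F (g t)

/-- The `(p,q)`-property: among any `p` members (with repetition allowed) some `q`
of them are intersecting. -/
def PQProperty (F : Finset (Set X)) (p q : ℕ) : Prop :=
  ∀ K : Fin p → Set X, (∀ i, K i ∈ F) →
    ∃ s : Finset (Fin p), s.card = q ∧ ∃ x, ∀ i ∈ s, x ∈ K i

/-- A compact set system: every subsystem with empty total intersection contains a
finite subfamily with empty intersection. -/
def CompactSystem (S : Set (Set X)) : Prop :=
  ∀ T ⊆ S, ⋂₀ T = ∅ → ∃ F : Finset (Set X), ↑F ⊆ T ∧ ⋂₀ (↑F : Set (Set X)) = ∅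

/-- The VC-dimension of `S` is at most `d`: every finite set shattered by `S` has
size at most `d`. -/
def VCDimLE (S : Set (Set X)) (d : ℕ) : Prop :=
  ∀ Y : Finset X, (∀ Z ⊆ Y, ∃ K ∈ S, (↑Y : Set X) ∩ K = ↑Z) → Y.card ≤ d

/-- `S^∩`: all intersections of nonempty subcollections of `S`. -/
def interClosure (S : Set (Set X)) : Set (Set X) :=
  {T | ∃ D ⊆ S, D.Nonempty ∧ T = ⋂₀ D}

end SetSystems

section Hypergraphs

variable {V : Type*} [DecidableEq V]

/-- An independent set of the hypergraph with edge set `E`: contains no edge. -/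
def IsIndep (E : Finset (Finset V)) (I : Set V) : Prop :=
  ∀ e ∈ E, ¬ ((↑e : Set V) ⊆ I)

/-- A maximal independent set. -/
def IsMaxIndep (E : Finset (Finset V)) (I : Set V) : Prop :=
  IsIndep E I ∧ ∀ J : Set V, IsIndep E J → I ⊆ J → J = I

/-- The ground set of the associated convexity space: the maximal independent sets. -/
abbrev MIS (E : Finset (Finset V)) : Type _ := {σ : Set V // IsMaxIndep E σ}

/-- `S_W`: the maximal independent sets containing `W`. -/
def SW (E : Finset (Finset V)) (W : Set V) : Set (MIS E) :=
  {σ : MIS E | W ⊆ σ.1}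

/-- The associated convexity space of the hypergraph with edge set `E`. -/
def assocC (E : Finset (Finset V)) : Set (Set (MIS E)) :=
  {T | ∃ W : Set V, T = SW E W}

/-- Property `T_k(m)`: among any `m` (not necessarily distinct) edges, some `k` of them
admit a system of distinct representatives which is an edge. -/
def PropT (E : Finset (Finset V)) (k m : ℕ) : Prop :=
  ∀ e : Fin m → Finset V, (∀ i, e i ∈ E) →
    ∃ (g : Fin k → Fin m) (v : Fin k → V), StrictMono g ∧ Function.Injective v ∧
      (∀ j, v j ∈ e (g j)) ∧ Finset.image v Finset.univ ∈ E

/-- The chromatic number of the hypergraph is at most `n`: the vertex set can be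
partitioned into (at most) `n` independent sets. -/
def ChromaticLE (E : Finset (Finset V)) (n : ℕ) : Prop :=
  ∃ P : Fin n → Set V, (∀ v : V, ∃! i, v ∈ P i) ∧
    ∀ i, (P i).Nonempty → IsIndep E (P i)

/-- The clique number is at most `w`: every set of vertices all of whose `k`-element
subsets are edges has size at most `w`. -/
def CliqueNumLE (E : Finset (Finset V)) (k w : ℕ) : Prop :=
  ∀ Q : Finset V, (∀ q ⊆ Q, q.card = k → q ∈ E) → Q.card ≤ w

/-- Property `δ_k(m)`: any sunflower of `m` edges contains `k` edges admitting a system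
of distinct representatives which is an edge. -/
def PropDelta (E : Finset (Finset V)) (k m : ℕ) : Prop :=
  ∀ G : Finset (Finset V), G ⊆ E → G.card = m →
    (∃ S : Finset V, ∀ e ∈ G, ∀ e' ∈ G, e ≠ e' → e ∩ e' = S) →
    ∃ (f : Fin k → Finset V) (v : Fin k → V), Function.Injective f ∧ (∀ j, f j ∈ G) ∧
      Function.Injective v ∧ (∀ j, v j ∈ f j) ∧ Finset.image v Finset.univ ∈ E

end Hypergraphs

/-!
Let `F` be minimally non-intersecting and choose, for each `K ∈ F`, a point `p K` common to all
the other members. These points are distinct, since a repeated point would lie in every member.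
If they had a Radon partition into `A` and `B`, then each `K ∈ F` would contain whichever part
misses `p K`, hence the hull of that part, so a common point of the two hulls would lie in every
member of `F`.
-/

section Levi

variable {X : Type*} {C : Set (Set X)}

theorem convHull_subset {K Y : Set X} (hK : K ∈ C) (hYK : Y ⊆ K) : convHull C Y ⊆ K :=
  Set.sInter_subset_of_mem ⟨hK, hYK⟩

theorem RadonLE.mono {m n : ℕ} (hr : RadonLE C m) (hmn : m ≤ n) : RadonLE C n :=
  fun Y hY => hr Y (hmn.trans hY)

section IndexedFamily

variable {ι : Type*} {K : ι → Set X} {p : ι → X}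

theorem subset_of_pairwise_mem_of_notMem (hp : Pairwise fun i j => p i ∈ K j) {A : Set X}
    (hA : A ⊆ Set.range p) {i : ι} (hi : p i ∉ A) : A ⊆ K i := by
  intro a ha
  obtain ⟨j, rfl⟩ := hA ha
  exact hp (ne_of_apply_ne p (ne_of_mem_of_not_mem ha hi))

theorem convHull_inter_convHull_subset_iInter (hK : ∀ i, K i ∈ C)
    (hp : Pairwise fun i j => p i ∈ K j) {A B : Set X} (hA : A ⊆ Set.range p)
    (hB : B ⊆ Set.range p) (hAB : Disjoint A B) :
    convHull C A ∩ convHull C B ⊆ ⋂ i, K i := by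
  refine Set.subset_iInter fun i => ?_
  by_cases hi : p i ∈ A
  · have hBK : B ⊆ K i :=
      subset_of_pairwise_mem_of_notMem hp hB (Set.disjoint_left.1 hAB hi)
    exact Set.inter_subset_right.trans (convHull_subset (hK i) hBK)
  · have hAK : A ⊆ K i := subset_of_pairwise_mem_of_notMem hp hA hi
    exact Set.inter_subset_left.trans (convHull_subset (hK i) hAK)

theorem injective_of_pairwise_mem_of_iInter_eq_empty (hp : Pairwise fun i j => p i ∈ K j)
    (hK : ⋂ i, K i = ∅) : Function.Injective p := by
  intro i j hij
  by_contra hne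
  have hmem : p i ∈ ⋂ k, K k := by
    refine Set.mem_iInter.2 fun k => ?_
    rcases eq_or_ne i k with rfl | hik
    · rw [hij]
      exact hp (Ne.symm hne)
    · exact hp hik
  exact Set.notMem_empty _ (hK ▸ hmem)

theorem RadonLE.iInter_nonempty [Fintype ι] {n : ℕ} (hr : RadonLE C n)
    (hn : n ≤ Fintype.card ι) (hK : ∀ i, K i ∈ C) (hp : Pairwise fun i j => p i ∈ K j) :
    (⋂ i, K i).Nonempty := by
  by_contra hempty
  have hinj : Function.Injective p :=
    injective_of_pairwise_mem_of_iInter_eq_empty hp (Set.not_nonempty_iff_eq_empty.1 hempty)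
  have hcard : n ≤ (Finset.univ.image p).card := by
    rwa [Finset.card_image_of_injective _ hinj, Finset.card_univ]
  obtain ⟨A, B, hunion, hdisj, hmeet⟩ := hr _ hcard
  have hrange : (A ∪ B : Set X) = Set.range p := by
    rw [hunion, Finset.coe_image, Finset.coe_univ, Set.image_univ]
  have hAB := Set.union_subset_iff.1 hrange.subset
  exact hempty (hmeet.mono (convHull_inter_convHull_subset_iInter hK hp hAB.1 hAB.2 hdisj))

end IndexedFamily

theorem MinNonIntersecting.exists_pairwise_mem {F : Finset (Set X)}
    (hF : MinNonIntersecting F) : ∃ p : F → X, Pairwise fun K L : F => p K ∈ (L : Set X) := by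
  choose p hp using fun K : F => hF.2 K K.2
  exact ⟨p, fun K L hKL =>
    hp K L (Finset.mem_erase.2 ⟨Subtype.coe_ne_coe.2 hKL.symm, L.2⟩)⟩

theorem helly_le_radon_sub_one_general {n : ℕ} (hr : RadonLE C (n + 1)) : HellyLE C n := by
  intro F hFC hF
  by_contra! hcard
  obtain ⟨p, hp⟩ := hF.exists_pairwise_mem
  obtain ⟨x, hx⟩ : (⋂ K : F, (K : Set X)).Nonempty :=
    hr.iInter_nonempty (by rwa [Fintype.card_coe]) (fun K => hFC K.2) hp
  exact hF.1 ⟨x, fun K hK => Set.mem_iInter.1 hx ⟨K, hK⟩⟩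

end Levi

/-- (Levi) If the Radon number of a convexity space is at most `r`,
then its Helly number is at most `r - 1`. -/
theorem helly_le_radon_sub_one {X : Type u} [Nonempty X] (C : Set (Set X))
    (hC : IsConvexitySpace C) (r : ℕ) (hr : RadonLE C r) :
    HellyLE C (r - 1) := by
  exact helly_le_radon_sub_one_general (hr.mono le_tsub_add)
end

section
/- For every integer k ≥ 3 there exists a convexity space (X, C) whose Radon number equals 4 and whose k-th Tverberg number satisfies t_k(X, C) ≥ 3k − 1; that is, every subset of X of size 4 admits a Radon partition, some subset of size 3 admits no Radon partition, and some subset of X of size 3k − 2 admits no Tverberg k-partition. -/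
open scoped Classical

universe u

/-!
Write `n = 3k - 2`. A point of the space is a family of subsets of an `n`-set, and a set of
points is convex when it consists of all points containing some prescribed sets. The base point
of an element `p` is the family of the sets that contain `p` or have at least four elements. A
point in the hull of the base points of the elements of `T` has `T` as a member, and `k`
disjoint members of one point cover more than `n` elements; hence the `n` base points have no
Tverberg `k`-partition.

The matching points are there to make any four points Radon partitionable. Two distinct points
share at most one set of size at most two, so if splitting four points into two pairs never
gives a Radon partition, then the two pairs always share different sets of this size. Such a
quadruple has a matching point `x`, as the matching point with edges `{a, b}` and `{c, d}` lies
in the hulls of both halves of four base points, and one of the at most two edges of `x` is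
shared with two of the other points. The last point misses this edge; it is the base point of
some `p`, because a matching point would in turn have an edge common to all but one of the
points. A common member of the three points other than `x` then has at least four elements, or
three including `p`; in the latter case it meets the edge that `x` shares with the base point of
`p`. Either way it belongs to `x`: this is a Radon partition after all.
-/

section Extents

variable {X β : Type*}

lemma isConvexitySpace_of_finite [Finite X] {C : Set (Set X)} (h_empty : ∅ ∈ C)
    (h_univ : Set.univ ∈ C) (h_sInter : ∀ D ⊆ C, D.Nonempty → ⋂₀ D ∈ C) :
    IsConvexitySpace C := by
  refine ⟨h_empty, h_univ, h_sInter, fun D hDC hD hchain => ?_⟩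
  obtain ⟨M, hM⟩ := D.toFinite.exists_maximal hD
  have h_greatest : ⋃₀ D = M :=
    (Set.sUnion_subset fun K hK => (hchain.total hK hM.1).elim id (hM.2 hK)).antisymm
      (Set.subset_sUnion_of_mem hM.1)
  exact h_greatest ▸ hDC hM.1

lemma isConvexitySpace_setOf_isExtent [Finite X] {r : X → β → Prop} {b : β}
    (hb : ∀ x, ¬ r x b) : IsConvexitySpace {K | Order.IsExtent r K} := by
  refine isConvexitySpace_of_finite ⟨{b}, ?_⟩ .univ fun D hD _ => ?_
  · simpa [Set.eq_empty_iff_forall_notMem] using hb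
  · exact Set.sInter_eq_biInter ▸ Order.IsExtent.iInter₂ _ fun K hK => hD hK

lemma mem_convHull_setOf_isExtent {r : X → β → Prop} {Y : Set X} {y : X} :
    y ∈ convHull {K | Order.IsExtent r K} Y ↔ ∀ b, (∀ x ∈ Y, r x b) → r y b := by
  constructor
  · intro hy b hb
    exact hy (lowerPolar r {b}) ⟨⟨_, rfl⟩, fun x hx => by simpa using hb x hx⟩ rfl
  · rintro hy _ ⟨⟨t, rfl⟩, hYt⟩ b hb
    exact hy b fun x hx => hYt hx hb

end Extents

section Partitions

variable {X : Type*} {C : Set (Set X)} {Y : Finset X}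

lemma hasRadonPartition_of_subset {S : Finset X} (hS : S ⊆ Y)
    (h : (convHull C ↑S ∩ convHull C ↑(Y \ S)).Nonempty) : HasRadonPartition C Y :=
  ⟨S, Y \ S, by exact_mod_cast Finset.union_sdiff_of_subset hS,
    Finset.disjoint_coe.2 Finset.disjoint_sdiff, h⟩

lemma HasRadonPartition.hasTverbergPartition_two (h : HasRadonPartition C Y) :
    HasTverbergPartition C 2 Y := by
  obtain ⟨A, B, hAB, h_disj, y, hyA, hyB⟩ := h
  refine ⟨![A, B], ?_, ?_, y, ?_⟩
  · ext x
    simp [← hAB, Fin.exists_fin_two]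
  · rw [Finset.disjoint_coe] at h_disj
    simpa [Fin.forall_fin_two] using ⟨h_disj, h_disj.symm⟩
  · simpa [Fin.forall_fin_two] using ⟨hyA, hyB⟩

end Partitions

lemma card_mul_add_card_compl_mul_le_sum {ι : Type*} [Fintype ι] (s : Finset ι) (f : ι → ℕ)
    {b c : ℕ} (hb : ∀ i ∈ s, b ≤ f i) (hc : ∀ i ∉ s, c ≤ f i) :
    s.card * b + sᶜ.card * c ≤ ∑ i, f i := by
  rw [← Finset.sum_add_sum_compl s]
  gcongr
  · exact Finset.card_nsmul_le_sum s f b hb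
  · exact Finset.card_nsmul_le_sum sᶜ f c fun i hi => hc i (Finset.mem_compl.1 hi)

namespace Bukh

open Finset

variable {α : Type*}

/-- A set of at most two pairwise disjoint two-element sets (edges). -/
structure IsSmallMatching (M : Finset (Finset α)) : Prop where
  card_le_two : #M ≤ 2
  card_edge : ∀ e ∈ M, #e = 2
  pairwiseDisjoint : (M : Set (Finset α)).PairwiseDisjoint id

lemma IsSmallMatching.eq_pair {M : Finset (Finset α)} {A B : Finset α} (hM : IsSmallMatching M)
    (hA : A ∈ M) (hB : B ∈ M) (hAB : A ≠ B) : M = {A, B} :=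
  (eq_of_subset_of_card_le (insert_subset hA (singleton_subset_iff.2 hB))
    (by rw [card_pair hAB]; exact hM.card_le_two)).symm

variable (α) in
/-- The points of the space, as labels of families of finite subsets of `α`; the family of a
label is given by the membership relation below. -/
inductive Point
  | base (p : α)
  | matching (M : Finset (Finset α)) (hM : IsSmallMatching M)

namespace Point

/-- `A ∈ x` says that the set `A` belongs to the family labelled by `x`. The sets of size at most
two in the family of a matching are its edges; a matching with fewer than two edges has all
three-element sets, so that its family is the largest one of sets of size at least two with the
given edges. -/
instance : Membership (Finset α) (Point α) where
  mem x A := match x with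
    | base p => p ∈ A ∨ 4 ≤ #A
    | matching M _ => A ∈ M ∨ 4 ≤ #A ∨ #A = 3 ∧ (#M ≤ 1 ∨ ∃ e ∈ M, ¬ Disjoint e A)

lemma mem_base {p : α} {A : Finset α} : A ∈ base p ↔ p ∈ A ∨ 4 ≤ #A := .rfl

lemma mem_matching {M : Finset (Finset α)} {hM : IsSmallMatching M} {A : Finset α} :
    A ∈ matching M hM ↔ A ∈ M ∨ 4 ≤ #A ∨ #A = 3 ∧ (#M ≤ 1 ∨ ∃ e ∈ M, ¬ Disjoint e A) := .rfl

instance [Finite α] : Finite (Point α) :=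
  .of_surjective (α := α ⊕ {M : Finset (Finset α) // IsSmallMatching M})
    (Sum.elim base fun M => matching M.1 M.2) fun
    | base p => ⟨.inl p, rfl⟩
    | matching M hM => ⟨.inr ⟨M, hM⟩, rfl⟩

lemma base_injective : Function.Injective (base : α → Point α) := fun _ _ => base.inj

lemma mem_of_mem_base {p : α} {A : Finset α} (hA : A ∈ base p) (h : #A ≤ 3) : p ∈ A :=
  (mem_base.1 hA).resolve_right (by omega)

lemma mem_of_mem_matching {M : Finset (Finset α)} {hM : IsSmallMatching M} {A : Finset α}
    (hA : A ∈ matching M hM) (h : #A ≤ 2) : A ∈ M :=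
  (mem_matching.1 hA).resolve_right (by omega)

lemma two_le_card_of_mem_matching {M : Finset (Finset α)} {hM : IsSmallMatching M}
    {A : Finset α} (hA : A ∈ matching M hM) : 2 ≤ #A := by
  by_contra! h
  have := hM.card_edge A (mem_of_mem_matching hA h.le)
  omega

lemma empty_notMem (x : Point α) : ∅ ∉ x := by
  cases x with
  | base p => simp [mem_base]
  | matching M hM => exact fun h => absurd (two_le_card_of_mem_matching h) (by simp)

lemma mem_matching_of_pair_mem {M : Finset (Finset α)} {hM : IsSmallMatching M} {a b : α}
    (hab : a ≠ b) (hM_pair : {a, b} ∈ M) {A : Finset α} (ha : A ∈ base a) (hb : A ∈ base b) :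
    A ∈ matching M hM := by
  rw [mem_matching]
  by_cases h4 : 4 ≤ #A
  · exact .inr (.inl h4)
  replace ha := mem_of_mem_base ha (by omega)
  replace hb := mem_of_mem_base hb (by omega)
  have h_sub : {a, b} ⊆ A := insert_subset ha (singleton_subset_iff.2 hb)
  by_cases h3 : #A = 3
  · exact .inr (.inr ⟨h3, .inr ⟨_, hM_pair, not_disjoint_iff.2 ⟨a, by simp, ha⟩⟩⟩)
  · rw [eq_of_subset_of_card_le h_sub (by rw [card_pair hab]; omega)] at hM_pair
    exact .inl hM_pair

section CommonMembers

variable {x y : Point α} {A B : Finset α}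

lemma two_le_card_of_mem (hxy : x ≠ y) (hx : A ∈ x) (hy : A ∈ y) : 2 ≤ #A := by
  rcases x with a | ⟨M, hM⟩
  · rcases y with b | ⟨M, hM⟩
    · by_contra! h
      have ha : a ∈ A := mem_of_mem_base hx (by omega)
      have hb : b ∈ A := mem_of_mem_base hy (by omega)
      exact h.not_ge (one_lt_card.2 ⟨a, ha, b, hb, by simpa using hxy⟩)
    · exact two_le_card_of_mem_matching hy
  · exact two_le_card_of_mem_matching hx

lemma eq_of_mem_base_of_mem_matching {p : α} {M : Finset (Finset α)} {hM : IsSmallMatching M}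
    (hAp : A ∈ base p) (hAM : A ∈ matching M hM) (hA : #A ≤ 2)
    (hBp : B ∈ base p) (hBM : B ∈ matching M hM) (hB : #B ≤ 2) : A = B := by
  have hAB : ¬ Disjoint A B :=
    not_disjoint_iff.2 ⟨p, mem_of_mem_base hAp (by omega), mem_of_mem_base hBp (by omega)⟩
  exact hM.pairwiseDisjoint.elim (mem_of_mem_matching hAM hA) (mem_of_mem_matching hBM hB) hAB

lemma eq_of_mem (hxy : x ≠ y) (hAx : A ∈ x) (hAy : A ∈ y) (hA : #A ≤ 2)
    (hBx : B ∈ x) (hBy : B ∈ y) (hB : #B ≤ 2) : A = B := by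
  rcases x with a | ⟨M, hM⟩ <;> rcases y with b | ⟨N, hN⟩
  · have hab : a ≠ b := by simpa using hxy
    have eq_pair {C : Finset α} (ha : C ∈ base a) (hb : C ∈ base b) (hC : #C ≤ 2) : {a, b} = C :=
      eq_of_subset_of_card_le (insert_subset (mem_of_mem_base ha (by omega))
        (singleton_subset_iff.2 (mem_of_mem_base hb (by omega)))) (by rwa [card_pair hab])
    exact (eq_pair hAx hAy hA).symm.trans (eq_pair hBx hBy hB)
  · exact eq_of_mem_base_of_mem_matching hAx hAy hA hBx hBy hB
  · exact eq_of_mem_base_of_mem_matching hAy hAx hA hBy hBx hB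
  · by_contra hAB
    refine hxy ?_
    congr 1
    rw [hM.eq_pair (mem_of_mem_matching hAx hA) (mem_of_mem_matching hBx hB) hAB,
      hN.eq_pair (mem_of_mem_matching hAy hA) (mem_of_mem_matching hBy hB) hAB]

end CommonMembers

lemma exists_forall_mem_of_subsingleton {U : Set (Finset α)} (hU : ∀ A ∈ U, 2 ≤ #A)
    (h : {A ∈ U | #A ≤ 2}.Subsingleton) : ∃ z : Point α, ∀ A ∈ U, A ∈ z := by
  obtain ⟨M, hM_card, hM⟩ : ∃ M : Finset (Finset α), #M ≤ 1 ∧ (M : Set _) = {A ∈ U | #A ≤ 2} := by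
    refine ⟨h.finite.toFinset, ?_, by simp⟩
    simpa [card_le_one, Set.Subsingleton] using h
  have mem_M {A : Finset α} : A ∈ M ↔ A ∈ U ∧ #A ≤ 2 := by rw [← mem_coe, hM]; rfl
  refine ⟨matching M ⟨by omega, fun e he => ?_, ?_⟩, fun A hA => ?_⟩
  · obtain ⟨heU, he2⟩ := mem_M.1 he
    exact he2.antisymm (hU e heU)
  · exact (hM ▸ h).pairwise _
  · rw [mem_matching, mem_M]
    have : #M ≤ 1 := hM_card
    grind

lemma exists_forall_mem_of_base {a b c d : α} (hab : a ≠ b) (hac : a ≠ c) (had : a ≠ d)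
    (hbc : b ≠ c) (hbd : b ≠ d) (hcd : c ≠ d) :
    ∃ z : Point α, (∀ A, A ∈ base a → A ∈ base b → A ∈ z) ∧
      ∀ A, A ∈ base c → A ∈ base d → A ∈ z := by
  have h_disj : Disjoint ({a, b} : Finset α) {c, d} := by
    simp [hac.symm, had.symm, hbc.symm, hbd.symm]
  have hM : IsSmallMatching ({{a, b}, {c, d}} : Finset (Finset α)) :=
    ⟨Finset.card_le_two, by simp [card_pair hab, card_pair hcd], by
      rw [coe_pair]
      exact Set.pairwise_pair.2 fun _ => ⟨h_disj, h_disj.symm⟩⟩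
  exact ⟨matching _ hM, fun A => mem_matching_of_pair_mem hab (by simp),
    fun A => mem_matching_of_pair_mem hcd (by simp)⟩

section DisjointMembers

variable {ι : Type*} [Fintype ι] {P : ι → Finset α}

lemma four_mul_card_sub_three_le_sum_card {p : α}
    (h_disj : Pairwise fun i j => Disjoint (P i) (P j)) (hP : ∀ i, P i ∈ base p) :
    4 * Fintype.card ι - 3 ≤ ∑ i, #(P i) := by
  let s : Finset ι := {i | p ∈ P i}
  have mem_s (i : ι) : i ∈ s ↔ p ∈ P i := mem_filter_univ i
  have hs : #s ≤ 1 := card_le_one.2 fun i hi j hj => by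
    by_contra hij
    exact disjoint_left.1 (h_disj hij) ((mem_s i).1 hi) ((mem_s j).1 hj)
  have one_le (i : ι) (hi : i ∈ s) : 1 ≤ #(P i) := card_pos.2 ⟨p, (mem_s i).1 hi⟩
  have four_le (i : ι) (hi : i ∉ s) : 4 ≤ #(P i) := (hP i).resolve_left (mt (mem_s i).2 hi)
  have h_sum := card_mul_add_card_compl_mul_le_sum s (fun i => #(P i)) one_le four_le
  have h_compl := s.card_add_card_compl
  omega

lemma min_le_sum_card_of_matching {M : Finset (Finset α)} {hM : IsSmallMatching M}
    (h_disj : Pairwise fun i j => Disjoint (P i) (P j)) (hP : ∀ i, P i ∈ matching M hM) :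
    min (3 * Fintype.card ι - 1) (4 * Fintype.card ι - 4) ≤ ∑ i, #(P i) := by
  let s : Finset ι := {i | P i ∈ M}
  have mem_s (i : ι) : i ∈ s ↔ P i ∈ M := mem_filter_univ i
  have two_le (i : ι) : 2 ≤ #(P i) := two_le_card_of_mem_matching (hP i)
  have P_injective : Function.Injective P := fun i j hij => by
    by_contra hne
    have h_self : Disjoint (P i) (P j) := h_disj hne
    rw [← hij, disjoint_self_iff_empty, ← card_eq_zero] at h_self
    have := two_le i
    omega
  have hsM : s.image P ⊆ M := image_subset_iff.2 fun i => (mem_s i).1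
  have card_image : #(s.image P) = #s := card_image_of_injective s P_injective
  have hs : #s ≤ #M := card_image ▸ card_le_card hsM
  have hM2 := hM.card_le_two
  have h_compl := s.card_add_card_compl
  by_cases hs1 : #s ≤ 1
  · have three_le (i : ι) (hi : i ∉ s) : 3 ≤ #(P i) := by
      by_contra! h
      exact hi ((mem_s i).2 (mem_of_mem_matching (hP i) (by omega)))
    have h_sum := card_mul_add_card_compl_mul_le_sum s _ (fun i _ => two_le i) three_le
    omega
  · have hsM_eq : s.image P = M := eq_of_subset_of_card_le hsM (by omega)
    have four_le (i : ι) (hi : i ∉ s) : 4 ≤ #(P i) := by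
      have h_disj_edges : ∀ e ∈ M, Disjoint e (P i) := by
        rw [← hsM_eq, forall_mem_image]
        exact fun j hj => h_disj (ne_of_mem_of_not_mem hj hi)
      have hPi := mem_matching.1 (hP i)
      grind
    have h_sum := card_mul_add_card_compl_mul_le_sum s _ (fun i _ => two_le i) four_le
    omega

lemma min_le_sum_card (x : Point α) (h_disj : Pairwise fun i j => Disjoint (P i) (P j))
    (hP : ∀ i, P i ∈ x) :
    min (3 * Fintype.card ι - 1) (4 * Fintype.card ι - 4) ≤ ∑ i, #(P i) := by
  cases x with
  | base p =>
    have := four_mul_card_sub_three_le_sum_card h_disj hP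
    omega
  | matching M hM => exact min_le_sum_card_of_matching h_disj hP

end DisjointMembers

end Point

open Point

variable (α) in
/-- The convex sets are the sets of all points whose families contain some prescribed sets. -/
def convexity : Set (Set (Point α)) :=
  {K | Order.IsExtent (fun (x : Point α) (A : Finset α) => A ∈ x) K}

variable (α) in
lemma isConvexitySpace_convexity [Finite α] : IsConvexitySpace (convexity α) :=
  isConvexitySpace_setOf_isExtent empty_notMem

lemma mem_convHull_convexity {S : Set (Point α)} {y : Point α} :
    y ∈ convHull (convexity α) S ↔ ∀ A, (∀ x ∈ S, A ∈ x) → A ∈ y :=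
  mem_convHull_setOf_isExtent

section Tverberg

lemma preimage_mem_of_mem_convHull {S : Finset (Point α)} {y : Point α}
    (hS : (S : Set (Point α)) ⊆ Set.range base) (hy : y ∈ convHull (convexity α) S) :
    S.preimage base base_injective.injOn ∈ y := by
  refine mem_convHull_convexity.1 hy _ fun x hx => ?_
  obtain ⟨p, rfl⟩ := hS hx
  exact mem_base.2 (.inl (mem_preimage.2 hx))

lemma not_hasTverbergPartition_map_base {k : ℕ} {T : Finset α}
    (hT : #T < min (3 * k - 1) (4 * k - 4)) :
    ¬ HasTverbergPartition (convexity α) k (T.map ⟨base, base_injective⟩) := by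
  rintro ⟨P, hP_union, hP_disj, y, hy⟩
  rw [Set.mem_iInter] at hy
  have hP_sub (i : Fin k) : (P i : Set (Point α)) ⊆ base '' T := by
    simpa [hP_union] using Set.subset_iUnion (fun i => (P i : Set (Point α))) i
  let Q (i : Fin k) : Finset α := (P i).preimage base base_injective.injOn
  have hQ_disj : Pairwise (fun i j => Disjoint (Q i) (Q j)) := fun i j hij =>
    disjoint_left.2 fun p hpi hpj =>
      disjoint_left.1 (disjoint_coe.1 (hP_disj i j hij)) (mem_preimage.1 hpi) (mem_preimage.1 hpj)
  have hQ_mem (i : Fin k) : Q i ∈ y :=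
    preimage_mem_of_mem_convHull ((hP_sub i).trans (Set.image_subset_range ..)) (hy i)
  have hQ_sub : univ.biUnion Q ⊆ T := biUnion_subset.2 fun i _ p hp => by
    simpa [base_injective.mem_set_image] using hP_sub i (mem_coe.2 (mem_preimage.1 hp))
  have h_lower := min_le_sum_card y hQ_disj hQ_mem
  rw [Fintype.card_fin, ← card_biUnion fun i _ j _ hij => hQ_disj hij] at h_lower
  exact (h_lower.trans (card_le_card hQ_sub)).not_gt hT

end Tverberg

section Radon

variable {Y : Finset (Point α)}

lemma hasRadonPartition_of_forall_mem {S : Finset (Point α)} (hS : S ⊆ Y) {z : Point α}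
    (h : ∀ A, (∀ x ∈ S, A ∈ x) → A ∈ z) (h' : ∀ A, (∀ x ∈ Y \ S, A ∈ x) → A ∈ z) :
    HasRadonPartition (convexity α) Y :=
  hasRadonPartition_of_subset hS ⟨z, mem_convHull_convexity.2 h, mem_convHull_convexity.2 h'⟩

lemma exists_ne_of_not_hasRadonPartition (h : ¬ HasRadonPartition (convexity α) Y)
    {S : Finset (Point α)} (hSY : S ⊆ Y) (hS : S.Nontrivial) (hS' : (Y \ S).Nontrivial) :
    ∃ A B : Finset α, A ≠ B ∧ #A ≤ 2 ∧ #B ≤ 2 ∧ (∀ x ∈ S, A ∈ x) ∧ ∀ x ∈ Y \ S, B ∈ x := by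
  by_contra! h_eq
  obtain ⟨x, hx, y, hy, hxy⟩ := hS
  obtain ⟨z, hz, w, hw, hzw⟩ := hS'
  let U : Set (Finset α) := {A | (∀ x ∈ S, A ∈ x) ∨ ∀ x ∈ Y \ S, A ∈ x}
  obtain ⟨v, hv⟩ : ∃ v : Point α, ∀ A ∈ U, A ∈ v := by
    refine exists_forall_mem_of_subsingleton ?_ ?_
    · rintro A (hA | hA)
      · exact two_le_card_of_mem hxy (hA x hx) (hA y hy)
      · exact two_le_card_of_mem hzw (hA z hz) (hA w hw)
    · rintro A ⟨hA | hA, hA2⟩ B ⟨hB | hB, hB2⟩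
      · exact eq_of_mem hxy (hA x hx) (hA y hy) hA2 (hB x hx) (hB y hy) hB2
      · by_contra hAB
        obtain ⟨v, hv, hBv⟩ := h_eq A B hAB hA2 hB2 hA
        exact hBv (hB v hv)
      · by_contra hAB
        obtain ⟨v, hv, hAv⟩ := h_eq B A (Ne.symm hAB) hB2 hA2 hB
        exact hAv (hA v hv)
      · exact eq_of_mem hzw (hA z hz) (hA w hw) hA2 (hB z hz) (hB w hw) hB2
  exact h (hasRadonPartition_of_forall_mem hSY (fun A hA => hv A (.inl hA))
    fun A hA => hv A (.inr hA))

lemma sdiff_pair_nontrivial (hY : #Y = 4) (x y : Point α) : (Y \ {x, y}).Nontrivial := by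
  rw [← one_lt_card_iff_nontrivial]
  have := le_card_sdiff {x, y} Y
  have : #{x, y} ≤ 2 := Finset.card_le_two
  omega

lemma eq_of_forall_mem (hY : #Y = 4) {u w : Point α} {A B : Finset α}
    (hA : ∀ v ∈ Y, v ≠ u → A ∈ v) (hA2 : #A ≤ 2) (hB : ∀ v ∈ Y, v ≠ w → B ∈ v)
    (hB2 : #B ≤ 2) : A = B := by
  obtain ⟨x, hx, y, hy, hxy⟩ := sdiff_pair_nontrivial hY u w
  simp only [coe_sdiff, coe_insert, coe_singleton, Set.mem_sdiff, mem_coe, Set.mem_insert_iff,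
    Set.mem_singleton_iff, not_or] at hx hy
  exact eq_of_mem hxy (hA x hx.1 hx.2.1) (hA y hy.1 hy.2.1) hA2
    (hB x hx.1 hx.2.2) (hB y hy.1 hy.2.2) hB2

lemma exists_ne_of_pair (hY : #Y = 4) (h : ¬ HasRadonPartition (convexity α) Y)
    {x y : Point α} (hx : x ∈ Y) (hy : y ∈ Y) (hxy : x ≠ y) :
    ∃ A B : Finset α, A ≠ B ∧ #A ≤ 2 ∧ #B ≤ 2 ∧ A ∈ x ∧ A ∈ y ∧ ∀ v ∈ Y \ {x, y}, B ∈ v := by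
  have h_pair : ({x, y} : Finset (Point α)).Nontrivial := by
    simpa [Finset.Nontrivial] using Set.nontrivial_pair hxy
  obtain ⟨A, B, hAB, hA2, hB2, hA, hB⟩ := exists_ne_of_not_hasRadonPartition h
    (insert_subset hx (singleton_subset_iff.2 hy)) h_pair (sdiff_pair_nontrivial hY x y)
  exact ⟨A, B, hAB, hA2, hB2, hA x (by simp), hA y (by simp), hB⟩

lemma exists_card_le_two_mem (hY : #Y = 4) (h : ¬ HasRadonPartition (convexity α) Y)
    {x y : Point α} (hx : x ∈ Y) (hy : y ∈ Y) (hxy : x ≠ y) :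
    ∃ A : Finset α, #A ≤ 2 ∧ A ∈ x ∧ A ∈ y := by
  obtain ⟨A, -, -, hA2, -, hAx, hAy, -⟩ := exists_ne_of_pair hY h hx hy hxy
  exact ⟨A, hA2, hAx, hAy⟩

lemma exists_notMem (hY : #Y = 4) (h : ¬ HasRadonPartition (convexity α) Y)
    {A : Finset α} (hA2 : #A ≤ 2) : ∃ w ∈ Y, A ∉ w := by
  by_contra! hA
  obtain ⟨x, hx, y, hy, hxy⟩ := one_lt_card.1 (by omega : 1 < #Y)
  obtain ⟨z, hz, w, hw, hzw⟩ := sdiff_pair_nontrivial hY x y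
  obtain ⟨B, C, hBC, hB2, hC2, hBx, hBy, hC⟩ := exists_ne_of_pair hY h hx hy hxy
  have hAB : A = B := eq_of_mem hxy (hA x hx) (hA y hy) hA2 hBx hBy hB2
  have hAC : A = C := eq_of_mem hzw (hA z (mem_sdiff.1 hz).1) (hA w (mem_sdiff.1 hw).1) hA2
    (hC z hz) (hC w hw) hC2
  exact hBC (hAB.symm.trans hAC)

lemma exists_matching_mem (hY : #Y = 4) (h : ¬ HasRadonPartition (convexity α) Y) :
    ∃ M, ∃ hM : IsSmallMatching M, (matching M hM : Point α) ∈ Y := by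
  by_contra! h_base
  obtain ⟨x, y, z, w, hxy, hxz, hxw, hyz, hyw, hzw, rfl⟩ := card_eq_four.1 hY
  have exists_base {v : Point α} (hv : v ∈ ({x, y, z, w} : Finset (Point α))) :
      ∃ p, v = base p := by
    cases v with
    | base p => exact ⟨p, rfl⟩
    | matching M hM => exact absurd hv (h_base M hM)
  obtain ⟨a, rfl⟩ := exists_base (v := x) (by simp)
  obtain ⟨b, rfl⟩ := exists_base (v := y) (by simp)
  obtain ⟨c, rfl⟩ := exists_base (v := z) (by simp)
  obtain ⟨d, rfl⟩ := exists_base (v := w) (by simp)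
  rw [base_injective.ne_iff] at hxy hxz hxw hyz hyw hzw
  obtain ⟨v, hv_ab, hv_cd⟩ := exists_forall_mem_of_base hxy hxz hxw hyz hyw hzw
  refine h (hasRadonPartition_of_forall_mem (S := {base a, base b}) (z := v) ?_ ?_ ?_)
  · simp [insert_subset_iff]
  · exact fun A hA => hv_ab A (hA _ (by simp)) (hA _ (by simp))
  · exact fun A hA => hv_cd A (hA _ (by simp [hxz.symm, hyz.symm]))
      (hA _ (by simp [hxw.symm, hyw.symm]))

lemma exists_edge_missing_one (hY : #Y = 4) (h : ¬ HasRadonPartition (convexity α) Y)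
    {M : Finset (Finset α)} {hM : IsSmallMatching M} (hx : matching M hM ∈ Y) :
    ∃ w ∈ Y, w ≠ matching M hM ∧ ∃ g, #g ≤ 2 ∧ g ∉ w ∧ ∀ v ∈ Y, v ≠ w → g ∈ v := by
  have exists_edge : ∀ y ∈ Y.erase (matching M hM), ∃ g ∈ M, g ∈ y := fun y hy => by
    obtain ⟨g, hg2, hgx, hgy⟩ :=
      exists_card_le_two_mem hY h hx (mem_of_mem_erase hy) (ne_of_mem_erase hy).symm
    exact ⟨g, mem_of_mem_matching hgx hg2, hgy⟩
  choose! edge edge_mem mem_edge using exists_edge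
  obtain ⟨y, hy, z, hz, hyz, h_edge⟩ : ∃ y ∈ Y.erase (matching M hM),
      ∃ z ∈ Y.erase (matching M hM), y ≠ z ∧ edge y = edge z := by
    refine exists_ne_map_eq_of_card_lt_of_maps_to ?_ edge_mem
    have := hM.card_le_two
    rw [card_erase_of_mem hx]
    omega
  have hg_x : edge y ∈ matching M hM := mem_matching.2 (.inl (edge_mem y hy))
  have hg_y := mem_edge y hy
  have hg_z := h_edge ▸ mem_edge z hz
  have hg2 : #(edge y) ≤ 2 := (hM.card_edge _ (edge_mem y hy)).le
  obtain ⟨w, hw, hgw⟩ := exists_notMem hY h hg2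
  have h_erase : {matching M hM, y, z} = Y.erase w := by
    refine eq_of_subset_of_card_le ?_ ?_
    · grind
    · rw [card_erase_of_mem hw, card_eq_three.2 ⟨_, _, _, (ne_of_mem_erase hy).symm,
        (ne_of_mem_erase hz).symm, hyz, rfl⟩]
      omega
  refine ⟨w, hw, fun hwx => hgw (hwx ▸ hg_x), edge y, hg2, hgw, fun v hv hvw => ?_⟩
  have hv' : v ∈ ({matching M hM, y, z} : Finset (Point α)) := h_erase ▸ mem_erase.2 ⟨hvw, hv⟩
  simp only [mem_insert, mem_singleton] at hv'
  rcases hv' with rfl | rfl | rfl <;> assumption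

lemma exists_base_edge_missing (hY : #Y = 4) (h : ¬ HasRadonPartition (convexity α) Y)
    {M : Finset (Finset α)} {hM : IsSmallMatching M} (hx : matching M hM ∈ Y) :
    ∃ p, base p ∈ Y ∧ ∃ g, #g ≤ 2 ∧ g ∉ base p ∧ ∀ v ∈ Y, v ≠ base p → g ∈ v := by
  obtain ⟨w, hw, -, g, hg2, hgw, hg⟩ := exists_edge_missing_one hY h hx
  cases w with
  | base p => exact ⟨p, hw, g, hg2, hgw, hg⟩
  | matching N hN =>
    obtain ⟨w', -, hw', g', hg2', -, hg'⟩ := exists_edge_missing_one hY h hw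
    obtain rfl : g = g' := eq_of_forall_mem hY hg hg2 hg' hg2'
    exact absurd (hg' _ hw hw'.symm) hgw

lemma hasRadonPartition_of_card_eq_four (hY : #Y = 4) : HasRadonPartition (convexity α) Y := by
  by_contra h
  obtain ⟨M, hM, hx⟩ := exists_matching_mem hY h
  obtain ⟨p, hp, g, hg2, hgp, hg⟩ := exists_base_edge_missing hY h hx
  obtain ⟨e, he2, hex, hep⟩ := exists_card_le_two_mem hY h hx hp (by simp)
  have heM : e ∈ M := mem_of_mem_matching hex he2
  have hpe : p ∈ e := mem_of_mem_base hep (by omega)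
  refine h (hasRadonPartition_of_forall_mem (S := {matching M hM}) (z := matching M hM)
    (by simpa using hx) (by simp) fun A hA => ?_)
  replace hA : ∀ v ∈ Y, v ≠ matching M hM → A ∈ v := by simpa using hA
  have hAp : A ∈ base p := hA _ hp (by simp)
  have three_le : 3 ≤ #A := by
    by_contra! hA3
    obtain rfl : A = g := eq_of_forall_mem hY hA (by omega) hg hg2
    exact hgp hAp
  rw [mem_matching]
  by_cases h4 : 4 ≤ #A
  · exact .inr (.inl h4)
  · have hpA : p ∈ A := mem_of_mem_base hAp (by omega)
    exact .inr (.inr ⟨by omega, .inr ⟨e, heM, not_disjoint_iff.2 ⟨p, hpe, hpA⟩⟩⟩)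

end Radon

end Bukh

/-- (Bukh) For every `k ≥ 3` there is a convexity space with Radon number `4`
and `k`-th Tverberg number at least `3k - 1`. -/
theorem bukh_partition_counterexample (k : ℕ) (hk : 3 ≤ k) :
    ∃ (X : Type) (C : Set (Set X)), IsConvexitySpace C ∧
      (∀ Y : Finset X, Y.card = 4 → HasRadonPartition C Y) ∧
      (∃ Y : Finset X, Y.card = 3 ∧ ¬ HasRadonPartition C Y) ∧
      (∃ Y : Finset X, Y.card = 3 * k - 2 ∧ ¬ HasTverbergPartition C k Y) := by
  refine ⟨Bukh.Point (Fin (3 * k - 2)), Bukh.convexity _, Bukh.isConvexitySpace_convexity _,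
    fun _ => Bukh.hasRadonPartition_of_card_eq_four, ?_, ?_⟩
  · obtain ⟨T, -, hT⟩ : ∃ T ⊆ (Finset.univ : Finset (Fin (3 * k - 2))), T.card = 3 :=
      Finset.exists_subset_card_eq (by simp; omega)
    exact ⟨T.map ⟨Bukh.Point.base, Bukh.Point.base_injective⟩, by simp [hT], fun h =>
      Bukh.not_hasTverbergPartition_map_base (by omega) h.hasTverbergPartition_two⟩
  · exact ⟨Finset.univ.map ⟨Bukh.Point.base, Bukh.Point.base_injective⟩, by simp,
      Bukh.not_hasTverbergPartition_map_base (by simp; omega)⟩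
end

section
/- For all integers d, h ≥ 1 there exist constants c, d' > 0 such that the following holds: if (X, S) is a compact set system whose VC-dimension is at most d and whose Helly number is at most h, then the set system S^∩ obtained by taking all intersections of nonempty subcollections of S satisfies τ(F) ≤ c · τ*(F)^(d' · ln(τ*(F))) for every finite family F ⊆ S^∩; in particular, (X, S^∩) has the weak ε-net property. -/
open scoped Classical

universe u

/-! Let `μ` be a probability measure and let `K` be an intersection of members of `S` with
`μ K ≥ ε`. If `h * (3 * γ) ≤ 1`, the complements of `h` sets of measure more than `1 - 3 * γ` cannot
cover `X`, so by Helly and compactness all such members of `S` share a point, and it pierces `K` if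
`K` is an intersection of such members only. Otherwise `K ⊆ B` for some lighter `B ∈ S`. Bounded
VC-dimension makes `S` totally bounded for `μ (B ∆ B')`, with nets of size polynomial in `1 / ε`, so
`B` is close to a member `B'` of a finite net, and conditioning `μ` on `B'` multiplies the measure
of `K` by at least `1 + γ`. After `O(log (1 / ε))` rounds it would exceed `1`. The number of points
used is a polynomial in `1 / ε` raised to the number of rounds; for the normalised optimal
fractional transversal, where `ε = 1 / τ*`, this is the quasipolynomial bound. -/

section WeakEpsNets

open Finset MeasureTheory ProbabilityTheory
open scoped symmDiff

variable {X : Type*}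

lemma transversalLE_of_forall_exists_mem {F : Finset (Set X)} {T : Finset X} {n : ℕ}
    (hTn : T.card ≤ n) (hT : ∀ K ∈ F, ∃ x ∈ T, x ∈ K) : TransversalLE F n := by
  choose p hpT hpK using hT
  obtain ⟨e⟩ : Nonempty (T ↪ Fin n) := Function.Embedding.nonempty_of_card_le (by simpa using hTn)
  let part (K : Set X) (hK : K ∈ F) : Fin n := e ⟨p K hK, hpT K hK⟩
  refine ⟨fun i => {K ∈ F | ∃ hK : K ∈ F, part K hK = i}, fun i => filter_subset _ _,
    fun K hK => ⟨part K hK, by simp [hK], by simp [hK]⟩, ?_⟩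
  rintro i ⟨K, hKi⟩
  obtain ⟨hK, hKi⟩ := (mem_filter.1 hKi).2
  refine ⟨p K hK, fun L hLi => ?_⟩
  obtain ⟨hL, hLi⟩ := (mem_filter.1 hLi).2
  have hpKL : p K hK = p L hL := congrArg Subtype.val (e.injective (hKi.trans hLi.symm))
  exact hpKL ▸ hpK L hL

lemma exists_minNonIntersecting_subset {G : Finset (Set X)} (hG : ¬ IsIntersecting G) :
    ∃ G' ⊆ G, MinNonIntersecting G' := by
  obtain ⟨G', hG'G, hG', hmin⟩ := exists_minimal_le_of_wellFoundedLT (¬ IsIntersecting ·) G hG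
  refine ⟨G', hG'G, hG', fun K hK => ?_⟩
  by_contra hKn
  exact (mem_erase.1 (hmin hKn (erase_subset K G') hK)).1 rfl

lemma sum_range_choose_le_add_one_pow (n d : ℕ) :
    ∑ i ∈ range (d + 1), n.choose i ≤ (n + 1) ^ d := by
  rw [add_pow]
  refine sum_le_sum fun i hi => ?_
  rw [one_pow, mul_one]
  exact (Nat.choose_le_pow n i).trans
    (Nat.le_mul_of_pos_right _ (Nat.choose_pos (mem_range_succ_iff.1 hi)))

lemma VCDimLE.card_image_filter_le {S : Set (Set X)} {d : ℕ} (hS : VCDimLE S d)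
    (Y : Finset X) {N : Finset (Set X)} (hN : ↑N ⊆ S) :
    (N.image fun B => {y ∈ Y | y ∈ B}).card ≤ (Y.card + 1) ^ d := by
  set 𝒜 : Finset (Finset X) := N.image fun B => {y ∈ Y | y ∈ B}
  have hshatterer : 𝒜.shatterer ⊆ (range (d + 1)).biUnion fun i => powersetCard i Y := by
    intro Z hZ
    rw [mem_shatterer] at hZ
    have hZY : Z ⊆ Y := by
      obtain ⟨A, hA, hZA⟩ := hZ.exists_superset
      obtain ⟨B, -, rfl⟩ := mem_image.1 hA
      exact hZA.trans (filter_subset _ _)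
    have hZd : Z.card ≤ d := by
      refine hS Z fun W hWZ => ?_
      obtain ⟨A, hA, rfl⟩ := hZ hWZ
      obtain ⟨B, hB, rfl⟩ := mem_image.1 hA
      refine ⟨B, hN hB, ?_⟩
      ext x
      simpa using fun hx _ => hZY hx
    simpa [mem_powersetCard, Nat.lt_succ_iff] using ⟨hZd, hZY⟩
  calc 𝒜.card ≤ 𝒜.shatterer.card := card_le_card_shatterer 𝒜
    _ ≤ ∑ i ∈ range (d + 1), (powersetCard i Y).card :=
      (card_le_card hshatterer).trans card_biUnion_le
    _ = ∑ i ∈ range (d + 1), Y.card.choose i := by simp only [card_powersetCard]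
    _ ≤ (Y.card + 1) ^ d := sum_range_choose_le_add_one_pow Y.card d

lemma exists_isCover_card_lt {α : Type*} {U : SetRel α α} [U.IsRefl] [U.IsSymm] {s : Set α}
    {m : ℕ} (hm : ∀ N : Finset α, ↑N ⊆ s → U.IsSeparated ↑N → N.card < m) :
    ∃ N : Finset α, ↑N ⊆ s ∧ N.card < m ∧ U.IsCover s ↑N := by
  obtain ⟨N, hN⟩ : ∃ N, Maximal (fun N => N ⊆ s ∧ U.IsSeparated N) N := by
    refine zorn_subset {N | N ⊆ s ∧ U.IsSeparated N} fun c hcs hc =>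
      ⟨⋃₀ c, ⟨Set.sUnion_subset fun N hN => (hcs hN).1, ?_⟩, fun N => Set.subset_sUnion_of_mem⟩
    exact (Set.pairwise_sUnion hc.directedOn).2 fun N hN => (hcs hN).2
  have hfin : N.Finite := by
    by_contra hinf
    obtain ⟨M, hMN, hM⟩ := Set.Infinite.exists_subset_card_eq hinf m
    exact (hm M (hMN.trans hN.prop.1) (hN.prop.2.mono hMN)).ne hM
  lift N to Finset α using hfin
  exact ⟨N, hN.prop.1, hm N hN.prop.1 hN.prop.2, .of_maximal_isSeparated hN⟩

section Measure

variable [MeasurableSpace X] {μ : Measure X}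

/-- The relation "`B` and `B'` are `η`-close": their symmetric difference has measure at most `η`.
Stating this as an entourage of the pseudometric `μ (B ∆ B')` makes the packing and covering
vocabulary of `SetRel` available for set systems. -/
def symmDiffEntourage (μ : Measure X) (η : ℝ) : SetRel (Set X) (Set X) :=
  {p | μ.real (p.1 ∆ p.2) ≤ η}

instance symmDiffEntourage.isSymm (η : ℝ) : (symmDiffEntourage μ η).IsSymm where
  symm B B' h := by
    change μ.real (B' ∆ B) ≤ η
    rwa [symmDiff_comm]

lemma symmDiffEntourage.isRefl {η : ℝ} (hη : 0 ≤ η) : (symmDiffEntourage μ η).IsRefl where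
  refl B := by
    change μ.real (B ∆ B) ≤ η
    simpa using hη

section Probability

variable [IsProbabilityMeasure μ] {ι : Type*} {P : Finset ι} {Δ : ι → Set X} {η : ℝ}

lemma exists_mul_card_le_card_filter_mem (hmeas : ∀ p ∈ P, MeasurableSet (Δ p))
    (hΔ : ∀ p ∈ P, η ≤ μ.real (Δ p)) :
    ∃ x, η * P.card ≤ ({p ∈ P | x ∈ Δ p}.card : ℝ) := by
  have hint : ∀ p ∈ P, Integrable ((Δ p).indicator (1 : X → ℝ)) μ := fun p hp =>
    (integrable_const 1).indicator (hmeas p hp)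
  obtain ⟨x, hx⟩ := exists_integral_le (integrable_finsetSum P hint)
  refine ⟨x, ?_⟩
  calc η * P.card = ∑ _p ∈ P, η := by rw [sum_const, nsmul_eq_mul, mul_comm]
    _ ≤ ∑ p ∈ P, μ.real (Δ p) := sum_le_sum hΔ
    _ = ∫ y, ∑ p ∈ P, (Δ p).indicator 1 y ∂μ := by
      rw [integral_finsetSum P hint]
      exact sum_congr rfl fun p hp => (integral_indicator_one (hmeas p hp)).symm
    _ ≤ ∑ p ∈ P, (Δ p).indicator 1 x := hx
    _ = ({p ∈ P | x ∈ Δ p}.card : ℝ) := by simp [Set.indicator_apply, sum_boole]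

lemma exists_card_filter_disjoint_le (hmeas : ∀ p ∈ P, MeasurableSet (Δ p))
    (hΔ : ∀ p ∈ P, η ≤ μ.real (Δ p)) (m : ℕ) :
    ∃ Y : Finset X, Y.card ≤ m ∧
      ({p ∈ P | Disjoint ↑Y (Δ p)}.card : ℝ) ≤ Real.exp (-η * m) * P.card := by
  induction m with
  | zero => exact ⟨∅, by simp, by simp⟩
  | succ m ih =>
    obtain ⟨Y, hYm, hY⟩ := ih
    set Q := {p ∈ P | Disjoint ↑Y (Δ p)}
    have hQP : Q ⊆ P := filter_subset _ _
    obtain ⟨x, hx⟩ := exists_mul_card_le_card_filter_mem (μ := μ) (P := Q)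
      (fun p hp => hmeas p (hQP hp)) (fun p hp => hΔ p (hQP hp))
    refine ⟨insert x Y, (card_insert_le x Y).trans (Nat.succ_le_succ hYm), ?_⟩
    have hmissed : {p ∈ P | Disjoint ↑(insert x Y) (Δ p)} = {p ∈ Q | x ∉ Δ p} := by
      ext p
      simp only [Q, mem_filter, coe_insert, Set.disjoint_insert_left]
      tauto
    have hsplit : ({p ∈ Q | x ∈ Δ p}.card : ℝ) + {p ∈ Q | x ∉ Δ p}.card = Q.card :=
      mod_cast card_filter_add_card_filter_not (s := Q) (x ∈ Δ ·)
    rw [hmissed]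
    calc ({p ∈ Q | x ∉ Δ p}.card : ℝ) ≤ (1 - η) * Q.card := by linarith
      _ ≤ Real.exp (-η) * Q.card := by gcongr; exact Real.one_sub_le_exp_neg η
      _ ≤ Real.exp (-η) * (Real.exp (-η * m) * P.card) := by gcongr
      _ = Real.exp (-η * ↑(m + 1)) * P.card := by
        rw [← mul_assoc, ← Real.exp_add]
        push_cast
        ring_nf

lemma exists_card_le_forall_not_disjoint (hmeas : ∀ p ∈ P, MeasurableSet (Δ p))
    (hΔ : ∀ p ∈ P, η ≤ μ.real (Δ p)) {m : ℕ} (hm : Real.exp (-η * m) * P.card < 1) :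
    ∃ Y : Finset X, Y.card ≤ m ∧ ∀ p ∈ P, ¬ Disjoint ↑Y (Δ p) := by
  obtain ⟨Y, hYm, hY⟩ := exists_card_filter_disjoint_le hmeas hΔ m
  have hnone : {p ∈ P | Disjoint ↑Y (Δ p)} = ∅ := by
    rw [← card_eq_zero, ← Nat.lt_one_iff]
    exact_mod_cast hY.trans_lt hm
  exact ⟨Y, hYm, fun p hp => filter_eq_empty_iff.1 hnone hp⟩

end Probability

lemma exp_neg_mul_mul_pow_lt_one {n : ℕ} {k η : ℝ} (hn : n ≠ 0) (hk : 1 < k) (hη : n ≤ η * k) :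
    Real.exp (-η * (k ^ 2 - 1)) * k ^ n < 1 := by
  have hη0 : 0 < η := by
    have hn0 : (0 : ℝ) < n := by positivity
    exact pos_of_mul_pos_left (hn0.trans_le hη) (by linarith)
  have hpow : k ^ n ≤ Real.exp (n * (k - 1)) := by
    rw [Real.exp_nat_mul]
    gcongr
    linarith [Real.add_one_le_exp (k - 1)]
  calc Real.exp (-η * (k ^ 2 - 1)) * k ^ n
      ≤ Real.exp (-η * (k ^ 2 - 1)) * Real.exp (n * (k - 1)) := by gcongr
    _ = Real.exp ((n - η * (k + 1)) * (k - 1)) := by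
      rw [← Real.exp_add]
      ring_nf
    _ < 1 := by
      rw [Real.exp_lt_one_iff]
      exact mul_neg_of_neg_of_pos (by linarith) (by linarith)

section VCDim

variable [IsProbabilityMeasure μ] {S : Set (Set X)} {d k : ℕ} {η : ℝ}

/- Some `k ^ 2 - 1` points distinguish any `k ^ (2 * d + 1)` sets which are pairwise `η`-far,
whereas by Sauer–Shelah they see at most `k ^ (2 * d)` traces. -/
lemma VCDimLE.card_lt_of_isSeparated (hV : VCDimLE S d) (hS : ∀ B ∈ S, MeasurableSet B)
    (hk : 1 < k) (hη : 4 * d + 2 ≤ η * k) {N : Finset (Set X)} (hN : ↑N ⊆ S)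
    (hsep : (symmDiffEntourage μ η).IsSeparated ↑N) : N.card < k ^ (2 * d + 1) := by
  by_contra! hcard
  obtain ⟨M, hMN, hM⟩ := exists_subset_card_eq hcard
  have hMS : ∀ B ∈ M, B ∈ S := fun B hB => hN (hMN hB)
  have hk2 : 1 ≤ k ^ 2 := Nat.one_le_pow _ _ (by omega)
  have hpairs : (M.offDiag.card : ℝ) ≤ (k : ℝ) ^ (4 * d + 2) := by
    rw [offDiag_card, hM]
    exact_mod_cast (Nat.sub_le _ _).trans_eq (by ring)
  have hfew : Real.exp (-η * ((k ^ 2 - 1 : ℕ) : ℝ)) * M.offDiag.card < 1 := by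
    rw [Nat.cast_sub hk2, Nat.cast_pow, Nat.cast_one]
    calc Real.exp (-η * ((k : ℝ) ^ 2 - 1)) * M.offDiag.card
        ≤ Real.exp (-η * ((k : ℝ) ^ 2 - 1)) * (k : ℝ) ^ (4 * d + 2) := by gcongr
      _ < 1 := exp_neg_mul_mul_pow_lt_one (by omega) (mod_cast hk) (mod_cast hη)
  obtain ⟨Y, hYk, hY⟩ := exists_card_le_forall_not_disjoint (μ := μ) (P := M.offDiag)
    (Δ := fun p => p.1 ∆ p.2) (η := η)
    (fun p hp => (hS _ (hMS _ (mem_offDiag.1 hp).1)).symmDiff (hS _ (hMS _ (mem_offDiag.1 hp).2.1)))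
    (fun p hp => by
      obtain ⟨h₁, h₂, hne⟩ := mem_offDiag.1 hp
      exact (not_le.1 (hsep (hMN h₁) (hMN h₂) hne)).le)
    hfew
  have hinj : Set.InjOn (fun B : Set X => {y ∈ Y | y ∈ B}) ↑M := by
    intro B hB B' hB' htrace
    by_contra hne
    refine hY (B, B') (mem_offDiag.2 ⟨hB, hB', hne⟩) (Set.disjoint_left.2 fun y hyY hy => ?_)
    have hiff : y ∈ B ↔ y ∈ B' := by simpa [mem_coe.1 hyY] using Finset.ext_iff.1 htrace y
    simp [Set.mem_symmDiff, hiff] at hy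
  have hle : k ^ (2 * d + 1) ≤ k ^ (2 * d) := calc
    k ^ (2 * d + 1) = (M.image fun B => {y ∈ Y | y ∈ B}).card := by
      rw [card_image_of_injOn hinj, hM]
    _ ≤ (Y.card + 1) ^ d := hV.card_image_filter_le Y hMS
    _ ≤ (k ^ 2) ^ d := Nat.pow_le_pow_left (by omega) d
    _ = k ^ (2 * d) := (pow_mul k 2 d).symm
  exact hle.not_gt (Nat.pow_lt_pow_right hk (Nat.lt_succ_self _))

lemma VCDimLE.exists_isCover_symmDiffEntourage (hV : VCDimLE S d)
    (hS : ∀ B ∈ S, MeasurableSet B) (hη0 : 0 ≤ η) (hk : 1 < k) (hη : 4 * d + 2 ≤ η * k) :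
    ∃ N : Finset (Set X), ↑N ⊆ S ∧ N.card < k ^ (2 * d + 1) ∧
      (symmDiffEntourage μ η).IsCover S ↑N :=
  have := symmDiffEntourage.isRefl (μ := μ) hη0
  exists_isCover_card_lt fun _ hN => hV.card_lt_of_isSeparated hS hk hη hN

end VCDim

lemma HellyLE.exists_forall_mem_of_lt_measureReal [IsProbabilityMeasure μ] {S D : Set (Set X)}
    {h : ℕ} (hH : HellyLE S h) (hC : CompactSystem S) (hS : ∀ B ∈ S, MeasurableSet B)
    {δ : ℝ} (hδ : h * δ ≤ 1) (hDS : D ⊆ S) (hD : ∀ B ∈ D, 1 - δ < μ.real B) :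
    ∃ x, ∀ B ∈ D, x ∈ B := by
  by_contra hcon
  have hempty : ⋂₀ D = ∅ := Set.eq_empty_of_forall_notMem fun x hx => hcon ⟨x, hx⟩
  obtain ⟨G, hGD, hG⟩ := hC D hDS hempty
  obtain ⟨G', hG'G, hmin⟩ := exists_minNonIntersecting_subset (G := G) fun ⟨x, hx⟩ =>
    (hG ▸ hx : x ∈ (∅ : Set X))
  have hG'D : ↑G' ⊆ D := (coe_subset.2 hG'G).trans hGD
  have : Nonempty X := μ.nonempty_of_neZero
  have hG'ne : G'.Nonempty := by
    rw [nonempty_iff_ne_empty]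
    rintro rfl
    exact hmin.1 ⟨Classical.arbitrary X, by simp⟩
  have hlight : ∀ B ∈ G', μ.real Bᶜ < δ := fun B hB => by
    rw [probReal_compl_eq_one_sub (hS B (hDS (hG'D hB)))]
    linarith [hD B (hG'D hB)]
  have hδ0 : 0 ≤ δ := hG'ne.elim fun B hB => measureReal_nonneg.trans (hlight B hB).le
  have hcover : ⋃ B ∈ G', Bᶜ = Set.univ := by
    refine Set.eq_univ_of_forall fun x => ?_
    by_contra hx
    exact hmin.1 ⟨x, by simpa using hx⟩
  refine lt_irrefl (1 : ℝ) ?_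
  calc (1 : ℝ) = μ.real (⋃ B ∈ G', Bᶜ) := by rw [hcover, probReal_univ]
    _ ≤ ∑ B ∈ G', μ.real Bᶜ := measureReal_biUnion_finset_le G' _
    _ < ∑ _B ∈ G', δ := sum_lt_sum_of_nonempty hG'ne hlight
    _ = G'.card * δ := by rw [sum_const, nsmul_eq_mul]
    _ ≤ h * δ := by gcongr; exact hH G' (hG'D.trans hDS) hmin
    _ ≤ 1 := hδ

/-- `T` is a weak `ε`-net for the sets in `𝓕`: it meets every `K ∈ 𝓕` with `μ K ≥ ε`. The measure
of a non-measurable `K` is its outer measure. -/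
def IsWeakEpsNet (μ : Measure X) (𝓕 : Set (Set X)) (ε : ℝ) (T : Finset X) : Prop :=
  ∀ K ∈ 𝓕, ε ≤ μ.real K → ∃ x ∈ T, x ∈ K

lemma isWeakEpsNet_empty_of_lt [IsFiniteMeasure μ] {𝓕 : Set (Set X)} {ε : ℝ}
    (hε : μ.real Set.univ < ε) : IsWeakEpsNet μ 𝓕 ε ∅ := fun K _ hK =>
  absurd (hK.trans (measureReal_mono (Set.subset_univ K))) hε.not_ge

/- `B` is a light set containing `K` and `B'` is a set of the net close to `B`: conditioning on `B'`
loses little of `K` but discards a fixed proportion of the space. -/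
lemma mul_one_add_le_cond_real [IsProbabilityMeasure μ] {K B B' : Set X} {ε γ : ℝ}
    (hε : 0 < ε) (hγ : 0 < γ) (hB' : MeasurableSet B') (hKB : K ⊆ B) (hK : ε ≤ μ.real K)
    (hB : μ.real B ≤ 1 - 3 * γ) (hBB' : μ.real (B ∆ B') ≤ ε * γ) :
    ε * (1 + γ) ≤ (μ[|B']).real K := by
  have hε1 : ε ≤ 1 := hK.trans measureReal_le_one
  have hγ1 : γ < 1 := by linarith [measureReal_nonneg (μ := μ) (s := B)]
  have hinter : ε * (1 - γ) ≤ μ.real (B' ∩ K) := by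
    have hsub : K ⊆ (B' ∩ K) ∪ B ∆ B' := fun x hx => by
      by_cases hxB' : x ∈ B'
      · exact Or.inl ⟨hxB', hx⟩
      · exact Or.inr (Or.inl ⟨hKB hx, hxB'⟩)
    linarith [(measureReal_mono (μ := μ) hsub).trans (measureReal_union_le _ _)]
  have hB'le : μ.real B' ≤ 1 - 2 * γ := by
    have hsub : B' ⊆ B ∪ B ∆ B' := fun x hx => by
      by_cases hxB : x ∈ B
      · exact Or.inl hxB
      · exact Or.inr (Or.inr ⟨hx, hxB⟩)
    nlinarith [(measureReal_mono (μ := μ) hsub).trans (measureReal_union_le _ _)]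
  have hB'pos : 0 < μ.real B' :=
    (mul_pos hε (sub_pos.2 hγ1)).trans_le (hinter.trans (measureReal_mono Set.inter_subset_left))
  have hcond : (μ[|B']).real K = μ.real (B' ∩ K) / μ.real B' := by
    rw [measureReal_def, cond_apply hB', ENNReal.toReal_mul, ENNReal.toReal_inv, inv_mul_eq_div]
    rfl
  rw [hcond, le_div_iff₀ hB'pos]
  calc ε * (1 + γ) * μ.real B' ≤ ε * (1 + γ) * (1 - 2 * γ) := by gcongr
    _ ≤ ε * (1 - γ) := by nlinarith [mul_pos hε (mul_pos hγ hγ)]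
    _ ≤ μ.real (B' ∩ K) := hinter

lemma IsWeakEpsNet.insert_biUnion [IsProbabilityMeasure μ] {S : Set (Set X)} {ε γ : ℝ}
    (hε : 0 < ε) (hγ : 0 < γ) {x₀ : X} (hx₀ : ∀ B ∈ S, 1 - 3 * γ < μ.real B → x₀ ∈ B)
    {N : Finset (Set X)} (hNmeas : ∀ B' ∈ N, MeasurableSet B')
    (hN : (symmDiffEntourage μ (ε * γ)).IsCover S ↑N) {T : Set X → Finset X}
    (hT : ∀ B' ∈ N, IsWeakEpsNet μ[|B'] (interClosure S) (ε * (1 + γ)) (T B')) :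
    IsWeakEpsNet μ (interClosure S) ε (insert x₀ (N.biUnion T)) := by
  rintro K ⟨D, hDS, hDne, rfl⟩ hK
  by_cases hheavy : ∀ B ∈ D, 1 - 3 * γ < μ.real B
  · exact ⟨x₀, mem_insert_self _ _, fun B hB => hx₀ B (hDS hB) (hheavy B hB)⟩
  push Not at hheavy
  obtain ⟨B, hBD, hB⟩ := hheavy
  obtain ⟨B', hB'N, hBB'⟩ := hN (hDS hBD)
  obtain ⟨x, hxT, hxK⟩ := hT B' hB'N (⋂₀ D) ⟨D, hDS, hDne, rfl⟩
    (mul_one_add_le_cond_real hε hγ (hNmeas B' hB'N) (Set.sInter_subset_of_mem hBD) hK hB hBB')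
  exact ⟨x, mem_insert_of_mem (mem_biUnion.2 ⟨B', hB'N, hxT⟩), hxK⟩

theorem exists_isWeakEpsNet_interClosure {S : Set (Set X)} {d h k R : ℕ} {γ ε : ℝ}
    (hC : CompactSystem S) (hV : VCDimLE S d) (hH : HellyLE S h) (hS : ∀ B ∈ S, MeasurableSet B)
    (hγ : 0 < γ) (hγh : h * (3 * γ) ≤ 1) (hk1 : 1 < k) (hk : 4 * d + 2 ≤ ε * γ * k)
    (hR : 1 < ε * (1 + γ) ^ R) (μ : Measure X) [IsProbabilityMeasure μ] :
    ∃ T : Finset X, T.card ≤ (k ^ (2 * d + 1)) ^ R ∧ IsWeakEpsNet μ (interClosure S) ε T := by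
  induction R generalizing ε μ with
  | zero => exact ⟨∅, by simp, isWeakEpsNet_empty_of_lt (by simpa using hR)⟩
  | succ R ih =>
    have hε : 0 < ε := pos_of_mul_pos_left (one_pos.trans hR) (by positivity)
    obtain ⟨N, hNS, hNcard, hN⟩ :=
      hV.exists_isCover_symmDiffEntourage (μ := μ) hS (mul_pos hε hγ).le hk1 hk
    obtain ⟨x₀, hx₀⟩ := hH.exists_forall_mem_of_lt_measureReal (μ := μ) hC hS hγh
      (Set.sep_subset S fun B => 1 - 3 * γ < μ.real B) fun B hB => hB.2
    have hrec : ∀ B' : Set X, ∃ T : Finset X, T.card ≤ (k ^ (2 * d + 1)) ^ R ∧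
        IsWeakEpsNet μ[|B'] (interClosure S) (ε * (1 + γ)) T := fun B' => by
      rcases eq_zero_or_isProbabilityMeasure μ[|B'] with hzero | hprob
      · exact ⟨∅, by simp, isWeakEpsNet_empty_of_lt (by rw [hzero, measureReal_zero]; positivity)⟩
      · refine ih (hk.trans ?_) (by rwa [mul_assoc, ← pow_succ']) μ[|B']
        gcongr
        nlinarith
    choose T hTcard hT using hrec
    refine ⟨insert x₀ (N.biUnion T), ?_,
      .insert_biUnion hε hγ (fun B hB hheavy => hx₀ B ⟨hB, hheavy⟩)
        (fun B' hB' => hS B' (hNS hB')) hN fun B' _ => hT B'⟩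
    set b := k ^ (2 * d + 1)
    have hbR : 1 ≤ b ^ R := Nat.one_le_pow _ _ (by positivity)
    calc (insert x₀ (N.biUnion T)).card ≤ (N.biUnion T).card + 1 := card_insert_le _ _
      _ ≤ N.card * b ^ R + b ^ R := by
        gcongr
        exact card_biUnion_le_card_mul _ _ _ fun B' _ => hTcard B'
      _ = (N.card + 1) * b ^ R := by ring
      _ ≤ b * b ^ R := by gcongr; exact hNcard
      _ = b ^ (R + 1) := (pow_succ' b R).symm

end Measure

lemma FracTransversalLE.one_le {F : Finset (Set X)} {t : ℝ} (hF : F.Nonempty)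
    (ht : FracTransversalLE F t) : 1 ≤ t := by
  obtain ⟨f, hf, hcov, hft⟩ := ht
  obtain ⟨K, hK⟩ := hF
  calc 1 ≤ ∑ x ∈ f.support with x ∈ K, f x := hcov K hK
    _ ≤ ∑ x ∈ f.support, f x := sum_le_sum_of_subset_of_nonneg (filter_subset _ _)
      fun x _ _ => (hf x).1
    _ ≤ t := hft

lemma FracTransversalLE.nonneg {F : Finset (Set X)} {t : ℝ} (ht : FracTransversalLE F t) :
    0 ≤ t := by
  obtain ⟨f, hf, -, hft⟩ := ht
  exact (sum_nonneg fun x _ => (hf x).1).trans hft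

lemma real_sum_smul_dirac [MeasurableSpace X] [MeasurableSingletonClass X] {s : Finset X}
    {w : X → ℝ} (hw : ∀ x ∈ s, 0 ≤ w x) (K : Set X) :
    (∑ x ∈ s, ENNReal.ofReal (w x) • Measure.dirac x).real K = ∑ x ∈ s with x ∈ K, w x := by
  have hfinite : ∀ x ∈ s, (ENNReal.ofReal (w x) • Measure.dirac x) K ≠ ⊤ := fun x _ =>
    ENNReal.mul_ne_top ENNReal.ofReal_ne_top (measure_ne_top _ _)
  rw [measureReal_def, Measure.finsetSum_apply, ENNReal.toReal_sum hfinite, sum_filter]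
  refine sum_congr rfl fun x hx => ?_
  by_cases hxK : x ∈ K <;> simp [hxK, hw x hx]

lemma FracTransversalLE.exists_isProbabilityMeasure [MeasurableSpace X]
    [MeasurableSingletonClass X] {F : Finset (Set X)} {t : ℝ} (hF : F.Nonempty)
    (ht : FracTransversalLE F t) :
    ∃ μ : Measure X, IsProbabilityMeasure μ ∧ ∀ K ∈ F, t⁻¹ ≤ μ.real K := by
  obtain ⟨f, hf, hcov, hft⟩ := ht
  set s := ∑ x ∈ f.support, f x with hs
  have hs1 : 1 ≤ s := FracTransversalLE.one_le hF ⟨f, hf, hcov, le_rfl⟩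
  have hreal := real_sum_smul_dirac (s := f.support) (w := fun x => f x / s)
    fun x _ => div_nonneg (hf x).1 (zero_le_one.trans hs1)
  refine ⟨∑ x ∈ f.support, ENNReal.ofReal (f x / s) • Measure.dirac x, ?_, fun K hK => ?_⟩
  · rw [isProbabilityMeasure_iff_real, hreal]
    simp only [Set.mem_univ, filter_true]
    rw [← sum_div, ← hs, div_self (by positivity)]
  · rw [hreal, ← sum_div]
    calc t⁻¹ ≤ s⁻¹ := by gcongr
      _ = 1 / s := (one_div s).symm
      _ ≤ _ := by gcongr; exact hcov K hK

lemma transversalLE_of_pow_pow_le {S : Set (Set X)} {d h k R n : ℕ} {γ t : ℝ} (hC : CompactSystem S)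
    (hV : VCDimLE S d) (hH : HellyLE S h) (hγ : 0 < γ) (hγh : h * (3 * γ) ≤ 1) (hk1 : 1 < k)
    (hk : (4 * d + 2) / γ * t ≤ k) (hR : t < (1 + γ) ^ R) (hn : (k ^ (2 * d + 1)) ^ R ≤ n)
    {F : Finset (Set X)} (hFne : F.Nonempty) (hF : ↑F ⊆ interClosure S)
    (ht : FracTransversalLE F t) : TransversalLE F n := by
  let _ : MeasurableSpace X := ⊤
  have ht0 : 0 < t := one_pos.trans_le (ht.one_le hFne)
  obtain ⟨μ, hμ, hμF⟩ := ht.exists_isProbabilityMeasure hFne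
  obtain ⟨T, hTcard, hT⟩ := exists_isWeakEpsNet_interClosure (R := R) (ε := t⁻¹) hC hV hH
    (fun B _ => .of_discrete) hγ hγh hk1 (by field_simp at hk ⊢; linarith)
    (by rwa [← div_eq_inv_mul, one_lt_div ht0]) μ
  exact transversalLE_of_forall_exists_mem (hTcard.trans hn) fun K hK => hT K (hF hK) (hμF K hK)

lemma exists_lt_pow_and_le_log_div_log {q t : ℝ} (hq : 1 < q) (ht : 1 ≤ t) :
    ∃ R : ℕ, t < q ^ R ∧ (R : ℝ) ≤ 1 + (Real.log q)⁻¹ * Real.log t := by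
  have hlogq : 0 < Real.log q := Real.log_pos hq
  have hlogt : 0 ≤ Real.log t := Real.log_nonneg ht
  refine ⟨⌊(Real.log q)⁻¹ * Real.log t⌋₊ + 1, ?_, ?_⟩
  · rw [← Real.log_lt_log_iff (by positivity) (by positivity), Real.log_pow, ← div_lt_iff₀ hlogq,
      div_eq_inv_mul]
    exact_mod_cast Nat.lt_floor_add_one _
  · rw [Nat.cast_succ, add_comm]
    gcongr
    exact Nat.floor_le (by positivity)

lemma rpow_mul_one_add_log_le {Q b p t : ℝ} (hQ : 0 < Q) (hp : 0 ≤ p) (ht : 0 < t) :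
    (Q * t) ^ (p * (1 + b * Real.log t)) ≤
      Real.exp (p * (Real.log Q + (1 + b * Real.log Q) ^ 2)) *
        t ^ (p * (1 + b) * Real.log t) := by
  rw [Real.rpow_def_of_pos (by positivity), Real.rpow_def_of_pos ht, ← Real.exp_add,
    Real.log_mul hQ.ne' ht.ne', Real.exp_le_exp]
  set L := Real.log Q
  set x := Real.log t
  have hamgm : (1 + b * L) * x ≤ (1 + b * L) ^ 2 + x ^ 2 := by
    nlinarith [sq_nonneg (1 + b * L - x), sq_nonneg (1 + b * L), sq_nonneg x]
  calc (L + x) * (p * (1 + b * x)) = p * (L + (1 + b * L) * x + b * x ^ 2) := by ring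
    _ ≤ p * (L + ((1 + b * L) ^ 2 + x ^ 2) + b * x ^ 2) := by gcongr
    _ = p * (L + (1 + b * L) ^ 2) + x * (p * (1 + b) * x) := by ring

lemma exists_pow_pow_le_mul_rpow_log {p : ℕ} (hp : 0 < p) {a q : ℝ} (ha : 0 ≤ a) (hq : 1 < q) :
    ∃ c d' : ℝ, 0 < c ∧ 0 < d' ∧ ∀ t : ℝ, 1 ≤ t → ∃ k R : ℕ, 1 < k ∧ a * t ≤ k ∧ t < q ^ R ∧
      (((k ^ p) ^ R : ℕ) : ℝ) ≤ c * t ^ (d' * Real.log t) := by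
  have hb : 0 < (Real.log q)⁻¹ := inv_pos.2 (Real.log_pos hq)
  refine ⟨Real.exp (p * (Real.log (a + 3) + (1 + (Real.log q)⁻¹ * Real.log (a + 3)) ^ 2)),
    p * (1 + (Real.log q)⁻¹), Real.exp_pos _, by positivity, fun t ht => ?_⟩
  obtain ⟨R, hR, hRle⟩ := exists_lt_pow_and_le_log_div_log hq ht
  have hk : ((⌈a * t⌉₊ + 2 : ℕ) : ℝ) ≤ (a + 3) * t := by
    push_cast
    linarith [Nat.ceil_lt_add_one (show 0 ≤ a * t by positivity)]
  refine ⟨⌈a * t⌉₊ + 2, R, by omega, ?_, hR, le_trans ?_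
    (rpow_mul_one_add_log_le (Q := a + 3) (by positivity) p.cast_nonneg (by positivity))⟩
  · exact (Nat.le_ceil _).trans (mod_cast Nat.le_add_right _ _)
  calc ((((⌈a * t⌉₊ + 2) ^ p) ^ R : ℕ) : ℝ) ≤ ((a + 3) * t) ^ (p * R) := by
        rw [← pow_mul, Nat.cast_pow]
        gcongr
    _ = ((a + 3) * t) ^ ((p * R : ℕ) : ℝ) := (Real.rpow_natCast _ _).symm
    _ ≤ ((a + 3) * t) ^ (p * (1 + (Real.log q)⁻¹ * Real.log t)) := by
        rw [Nat.cast_mul]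
        gcongr
        nlinarith

end WeakEpsNets

/-- (Moran–Yehudayoff) For a compact set system of VC-dimension at most `d` and
Helly number at most `h`, the intersection closure satisfies
`τ(F) ≤ c * τ*(F) ^ (d' * ln τ*(F))`; in particular it has the weak ε-net property. -/
theorem compact_vc_helly_implies_weak_eps_net (d h : ℕ) (hd : 1 ≤ d) (hh : 1 ≤ h) :
    ∃ c d' : ℝ, 0 < c ∧ 0 < d' ∧
      ∀ (X : Type u) (S : Set (Set X)), CompactSystem S → VCDimLE S d → HellyLE S h →
        (∀ F : Finset (Set X), ↑F ⊆ interClosure S → ∀ t : ℝ, FracTransversalLE F t →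
          (∀ s : ℝ, FracTransversalLE F s → t ≤ s) →
          ∃ n : ℕ, (n : ℝ) ≤ c * t ^ (d' * Real.log t) ∧ TransversalLE F n) ∧
        WeakEpsNetProp (interClosure S) := by
  let γ : ℝ := (3 * h + 1)⁻¹
  have hγ : 0 < γ := by positivity
  have hγh : h * (3 * γ) ≤ 1 := by
    rw [← mul_assoc, mul_inv_le_iff₀ (by positivity)]
    linarith
  obtain ⟨c, d', hc, hd', hcount⟩ := exists_pow_pow_le_mul_rpow_log (p := 2 * d + 1)
    (a := (4 * d + 2) / γ) (q := 1 + γ) (by omega) (by positivity) (by linarith)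
  have hbound (X : Type u) (S : Set (Set X)) (hC : CompactSystem S) (hV : VCDimLE S d)
      (hH : HellyLE S h) (F : Finset (Set X)) (hF : ↑F ⊆ interClosure S) (t : ℝ)
      (ht : FracTransversalLE F t) : TransversalLE F ⌊c * t ^ (d' * Real.log t)⌋₊ := by
    rcases F.eq_empty_or_nonempty with rfl | hFne
    · exact transversalLE_of_forall_exists_mem (T := ∅) (Nat.zero_le _) (by simp)
    obtain ⟨k, R, hk1, hk, hR, hkR⟩ := hcount t (ht.one_le hFne)
    exact transversalLE_of_pow_pow_le hC hV hH hγ hγh hk1 hk hR (Nat.le_floor hkR) hFne hF ht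
  refine ⟨c, d', hc, hd', fun X S hC hV hH => ⟨fun F hF t ht _ => ⟨_, Nat.floor_le ?_,
    hbound X S hC hV hH F hF t ht⟩, _, fun F hF t ht _ => hbound X S hC hV hH F hF t ht⟩⟩
  have := ht.nonneg
  positivity
end

section
/- Let H = (V, E) be a finite k-uniform hypergraph with at least one edge, (X, C)_H its associated convexity space, and F = {S_{{v}} : v ∈ V} ⊆ C. Then the transversal number of F equals the chromatic number of H: τ(F) = χ(H). -/
open scoped Classical

universe u

/-!
Edges are finite, so independence has finite character and every independent set lies in a maximal
one. Hence a set of vertices is independent exactly when the sets `S_{v}`, for `v` in it, have a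
common element, and proper colourings of `H` correspond to partitions of `F` into intersecting
subfamilies. Distinct vertices may give the same member of `F`; that member then takes the colour
of one of them. A vertex in no edge lies in every maximal independent set, so `F` is finite even
when `V` is infinite.
-/

section Coloring

variable {X : Type*} {n : ℕ}

theorem transversalLE_iff_exists_coloring {F : Finset (Set X)} :
    TransversalLE F n ↔ ∃ c : F → Fin n, ∀ K, ∃ x, ∀ L, c L = c K → x ∈ L.1 := by
  constructor
  · rintro ⟨P, -, hP, hinter⟩
    choose c hc using fun K : F => (hP K K.2).exists
    refine ⟨c, fun K => ?_⟩
    obtain ⟨x, hx⟩ := hinter (c K) ⟨K, hc K⟩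
    exact ⟨x, fun L hL => hx L (hL ▸ hc L)⟩
  · rintro ⟨c, hc⟩
    have mem_fiber (a : Fin n) (K : Set X) :
        K ∈ (F.attach.filter (c · = a)).map (.subtype _) ↔ ∃ hK : K ∈ F, c ⟨K, hK⟩ = a := by
      simp
    refine ⟨fun a => (F.attach.filter (c · = a)).map (.subtype _), fun a K hK => ?_,
      fun K hK => ?_, ?_⟩
    · exact ((mem_fiber a K).1 hK).1
    · simp only [mem_fiber, hK, exists_true_left, existsUnique_eq']
    · rintro a ⟨K, hK⟩
      obtain ⟨hKF, rfl⟩ := (mem_fiber a K).1 hK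
      obtain ⟨x, hx⟩ := hc ⟨K, hKF⟩
      refine ⟨x, fun L hL => ?_⟩
      obtain ⟨hLF, hLK⟩ := (mem_fiber _ L).1 hL
      exact hx ⟨L, hLF⟩ hLK

theorem transversalLE_range_iff_exists_coloring {ι : Type*} {f : ι → Set X}
    (hf : (Set.range f).Finite) :
    TransversalLE hf.toFinset n ↔ ∃ c : ι → Fin n, ∀ i, ∃ x, ∀ j, c j = c i → x ∈ f j := by
  rw [transversalLE_iff_exists_coloring]
  constructor
  · rintro ⟨c, hc⟩
    have hmem (i : ι) : f i ∈ hf.toFinset := hf.mem_toFinset.2 ⟨i, rfl⟩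
    refine ⟨fun i => c ⟨f i, hmem i⟩, fun i => ?_⟩
    obtain ⟨x, hx⟩ := hc ⟨f i, hmem i⟩
    exact ⟨x, fun j => hx ⟨f j, hmem j⟩⟩
  · rintro ⟨c, hc⟩
    choose r hr using fun K : hf.toFinset => hf.mem_toFinset.1 K.2
    refine ⟨c ∘ r, fun K => ?_⟩
    obtain ⟨x, hx⟩ := hc (r K)
    exact ⟨x, fun L hL => hr L ▸ hx (r L) hL⟩

end Coloring

section AssociatedSpace

variable {V : Type*} {E : Finset (Finset V)}

theorem chromaticLE_iff_exists_coloring {n : ℕ} :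
    ChromaticLE E n ↔ ∃ c : V → Fin n, ∀ v, IsIndep E {w | c w = c v} := by
  constructor
  · rintro ⟨P, hP, hindep⟩
    choose c hc huniq using hP
    have fiber_eq (a : Fin n) : {w | c w = a} = P a :=
      Set.ext fun w => ⟨fun h => h ▸ hc w, fun h => (huniq w a h).symm⟩
    exact ⟨c, fun v => fiber_eq (c v) ▸ hindep (c v) ⟨v, hc v⟩⟩
  · rintro ⟨c, hc⟩
    refine ⟨fun a => {w | c w = a}, fun v => existsUnique_eq', ?_⟩
    rintro _ ⟨v, rfl⟩
    exact hc v

theorem IsIndep.mono {I J : Set V} (hJ : IsIndep E J) (hIJ : I ⊆ J) : IsIndep E I :=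
  fun e he heI => hJ e he (heI.trans hIJ)

theorem IsIndep.sUnion_of_isChain {c : Set (Set V)} (hchain : IsChain (· ⊆ ·) c)
    (hne : c.Nonempty) (hc : ∀ I ∈ c, IsIndep E I) : IsIndep E (⋃₀ c) := by
  intro e he hec
  obtain ⟨I, hI, heI⟩ := hchain.directedOn.exists_mem_subset_of_finite_of_subset_sUnion hne
    e.finite_toSet hec
  exact hc I hI e he heI

theorem IsIndep.exists_subset_isMaxIndep {I : Set V} (hI : IsIndep E I) :
    ∃ σ, I ⊆ σ ∧ IsMaxIndep E σ := by
  obtain ⟨σ, hIσ, hσ⟩ := zorn_subset_nonempty {J | IsIndep E J}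
    (fun c hc hchain hne => ⟨⋃₀ c, IsIndep.sUnion_of_isChain hchain hne hc,
      fun _ => Set.subset_sUnion_of_mem⟩) I hI
  exact ⟨σ, hIσ, hσ.prop, fun J hJ hσJ => (hσ.eq_of_subset hJ hσJ).symm⟩

theorem nonempty_SW_iff_isIndep {W : Set V} : (SW E W).Nonempty ↔ IsIndep E W := by
  constructor
  · rintro ⟨σ, hWσ⟩
    exact σ.2.1.mono hWσ
  · intro hW
    obtain ⟨σ, hWσ, hσ⟩ := hW.exists_subset_isMaxIndep
    exact ⟨⟨σ, hσ⟩, hWσ⟩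

theorem mem_SW_singleton {σ : MIS E} {v : V} : σ ∈ SW E {v} ↔ v ∈ σ.1 :=
  Set.singleton_subset_iff

theorem exists_forall_mem_SW_singleton_iff_isIndep {W : Set V} :
    (∃ σ, ∀ w ∈ W, σ ∈ SW E {w}) ↔ IsIndep E W := by
  simp only [mem_SW_singleton]
  exact nonempty_SW_iff_isIndep

theorem IsMaxIndep.mem_of_forall_notMem {σ : Set V} (hσ : IsMaxIndep E σ) {v : V}
    (hv : ∀ e ∈ E, v ∉ e) : v ∈ σ := by
  have hindep : IsIndep E (insert v σ) := fun e he hsub =>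
    hσ.1 e he ((Set.subset_insert_iff_of_notMem (hv e he)).1 hsub)
  rw [← hσ.2 _ hindep (Set.subset_insert v σ)]
  exact Set.mem_insert v σ

theorem finite_range_SW_singleton (E : Finset (Finset V)) :
    (Set.range fun v : V => SW E {v}).Finite := by
  have hcovered : (⋃ e ∈ E, (e : Set V)).Finite :=
    E.finite_toSet.biUnion fun e _ => e.finite_toSet
  refine ((hcovered.image fun v => SW E {v}).insert Set.univ).subset ?_
  rintro _ ⟨v, rfl⟩
  by_cases hv : ∃ e ∈ E, v ∈ e
  · exact .inr ⟨v, by simpa using hv, rfl⟩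
  · push Not at hv
    exact .inl (Set.eq_univ_of_forall fun σ => mem_SW_singleton.2 (σ.2.mem_of_forall_notMem hv))

theorem transversal_eq_chromatic_general (E : Finset (Finset V)) (n : ℕ) :
    TransversalLE (finite_range_SW_singleton E).toFinset n ↔ ChromaticLE E n := by
  rw [transversalLE_range_iff_exists_coloring, chromaticLE_iff_exists_coloring]
  exact exists_congr fun c => forall_congr' fun v => exists_forall_mem_SW_singleton_iff_isIndep

end AssociatedSpace

/-- For the family `F = {S_{{v}} : v ∈ V}` in the associated convexity space of
a `k`-uniform hypergraph `H`, the transversal number of `F` equals the chromatic number of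
`H`, i.e. the two minima agree. -/
theorem transversal_eq_chromatic {V : Type u} [Fintype V] [DecidableEq V] (k : ℕ)
    (E : Finset (Finset V)) (hunif : ∀ e ∈ E, e.card = k) (hne : E.Nonempty) :
    ∀ n : ℕ,
      TransversalLE (Finset.univ.image fun v : V => SW E {v}) n ↔ ChromaticLE E n := by
  intro n
  simpa only [Set.Finite.toFinset_range] using transversal_eq_chromatic_general E n
end

section
/- Let m, k, N be integers with m ≥ k ≥ 2 and N ≥ binom(m, k) · 2^k. Then there exists a family of pairs of sets (A_1, B_1), …, (A_m, B_m) such that: (i) for every 1 ≤ i ≤ m, A_i and B_i are nonempty, disjoint, and A_i ∪ B_i = {1, …, N}; and (ii) for every choice of indices 1 ≤ i_1 < i_2 < ⋯ < i_k ≤ m and every choice of sets W_1 ∈ {A_{i_1}, B_{i_1}}, W_2 ∈ {A_{i_2}, B_{i_2}}, …, W_k ∈ {A_{i_k}, B_{i_k}}, the intersection W_1 ∩ W_2 ∩ ⋯ ∩ W_k is nonempty. -/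
open scoped Classical

universe u

/-
Index the points of the ground set by the subsets of the index set with at most `k` elements, and
let `A i` consist of the points whose label contains `i`. Prescribing membership in `k` of the sets
`A i` amounts to prescribing the trace of a label on a `k`-set `s` of indices, and the prescribed
trace is itself a label. Every label lies in some `k`-set, so there are at most
`binom(m, k) * 2 ^ k` of them.
-/

section KIndependent

variable {ι X : Type*} {k : ℕ}

/-- `k`-independence of a family of sets, in the sense of Kleitman and Spencer: each of the cells
cut out by at most `k` members or their complements is nonempty. The cell given by the indices in
`s` lies in `A i` for `i ∈ s ∩ t` and in the complement of `A i` for `i ∈ s \ t`. Asking for at most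
`k` indices, rather than exactly `k`, matters only when the family has fewer than `k` members. -/
def IsKIndependent (k : ℕ) (A : ι → Set X) : Prop :=
  ∀ s : Finset ι, s.card ≤ k → ∀ t : Set ι, ∃ x, ∀ i ∈ s, x ∈ A i ↔ i ∈ t

theorem IsKIndependent.nonempty {A : ι → Set X} (hA : IsKIndependent k A) (hk : 0 < k) (i : ι) :
    (A i).Nonempty := by
  obtain ⟨x, hx⟩ := hA {i} ((Finset.card_singleton i).trans_le hk) Set.univ
  exact ⟨x, (hx i (Finset.mem_singleton_self i)).2 trivial⟩

theorem IsKIndependent.nonempty_compl {A : ι → Set X} (hA : IsKIndependent k A) (hk : 0 < k)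
    (i : ι) : (A i)ᶜ.Nonempty := by
  obtain ⟨x, hx⟩ := hA {i} ((Finset.card_singleton i).trans_le hk) ∅
  exact ⟨x, (hx i (Finset.mem_singleton_self i)).1⟩

theorem IsKIndependent.nonempty_iInter {κ : Type*} [Fintype κ] {A : ι → Set X}
    (hA : IsKIndependent k A) (hκ : Fintype.card κ ≤ k) {g : κ → ι} (hg : g.Injective)
    {W : κ → Set X} (hW : ∀ j, W j = A (g j) ∨ W j = (A (g j))ᶜ) : (⋂ j, W j).Nonempty := by
  obtain ⟨x, hx⟩ := hA (Finset.univ.image g) (Finset.card_image_le.trans hκ)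
    (g '' {j | W j = A (g j)})
  have mem_iff (j : κ) : x ∈ A (g j) ↔ W j = A (g j) :=
    (hx (g j) (Finset.mem_image_of_mem g (Finset.mem_univ j))).trans hg.mem_set_image
  refine ⟨x, Set.mem_iInter.2 fun j => ?_⟩
  by_cases h : W j = A (g j)
  · rw [h]
    exact (mem_iff j).2 h
  · rw [(hW j).resolve_left h]
    exact mt (mem_iff j).1 h

theorem isKIndependent_image (e : {t : Finset ι // t.card ≤ k} ↪ X) :
    IsKIndependent k fun i => e '' {t | i ∈ t.1} := by
  intro s hs t
  refine ⟨e ⟨s.filter (· ∈ t), (Finset.card_filter_le _ _).trans hs⟩, fun i hi => ?_⟩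
  exact e.injective.mem_set_image.trans (Finset.mem_filter.trans (and_iff_right hi))

end KIndependent

theorem card_filter_powerset_card_le {α : Type*} {s : Finset α} {k : ℕ} (hk : k ≤ s.card) :
    (s.powerset.filter (·.card ≤ k)).card ≤ s.card.choose k * 2 ^ k := by
  have subset_biUnion :
      s.powerset.filter (·.card ≤ k) ⊆ (s.powersetCard k).biUnion Finset.powerset := by
    intro t ht
    obtain ⟨hts, htk⟩ := Finset.mem_filter.1 ht
    obtain ⟨u, htu, hus, huk⟩ :=
      Finset.exists_subsuperset_card_eq (Finset.mem_powerset.1 hts) htk hk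
    exact Finset.mem_biUnion.2
      ⟨u, Finset.mem_powersetCard.2 ⟨hus, huk⟩, Finset.mem_powerset.2 htu⟩
  calc (s.powerset.filter (·.card ≤ k)).card
      ≤ ((s.powersetCard k).biUnion Finset.powerset).card := Finset.card_le_card subset_biUnion
    _ ≤ (s.powersetCard k).card * 2 ^ k := Finset.card_biUnion_le_card_mul _ _ _ fun u hu => by
        rw [Finset.card_powerset, (Finset.mem_powersetCard.1 hu).2]
    _ = s.card.choose k * 2 ^ k := by rw [Finset.card_powersetCard]

theorem nonempty_embedding_of_choose_mul_two_pow_le {ι X : Type*} [Fintype ι] [Fintype X] {k : ℕ}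
    (hk : k ≤ Fintype.card ι) (hX : (Fintype.card ι).choose k * 2 ^ k ≤ Fintype.card X) :
    Nonempty ({t : Finset ι // t.card ≤ k} ↪ X) := by
  refine Function.Embedding.nonempty_of_card_le (le_trans ?_ hX)
  rw [Fintype.card_subtype, ← Finset.powerset_univ]
  exact card_filter_powerset_card_le hk

theorem set_pairs_construction_general {ι X : Type*} {k : ℕ} (hk : 0 < k)
    (e : {t : Finset ι // t.card ≤ k} ↪ X) :
    ∃ A B : ι → Set X,
      (∀ i, (A i).Nonempty ∧ (B i).Nonempty ∧ Disjoint (A i) (B i) ∧ A i ∪ B i = Set.univ) ∧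
      ∀ g : Fin k → ι, g.Injective → ∀ W : Fin k → Set X,
        (∀ j, W j = A (g j) ∨ W j = B (g j)) → (⋂ j, W j).Nonempty := by
  have hA := isKIndependent_image e
  exact ⟨_, fun i => (e '' {t | i ∈ t.1})ᶜ,
    fun i => ⟨hA.nonempty hk i, hA.nonempty_compl hk i, disjoint_compl_right,
      Set.union_compl_self _⟩,
    fun _ hg _ hW => hA.nonempty_iInter (Fintype.card_fin k).le hg hW⟩

/-- For `m ≥ k ≥ 2` and `N ≥ binom(m,k) * 2 ^ k` there are partitions
`(A_i, B_i)` of `{1,…,N}` (into nonempty disjoint parts) such that for every `k` indices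
`i_1 < ⋯ < i_k` and every choice `W_j ∈ {A_{i_j}, B_{i_j}}`, the `W_j` have a common
element. -/
theorem set_pairs_construction (m k N : ℕ) (hk : 2 ≤ k) (hkm : k ≤ m)
    (hN : m.choose k * 2 ^ k ≤ N) :
    ∃ A B : Fin m → Finset (Fin N),
      (∀ i, (A i).Nonempty ∧ (B i).Nonempty ∧ Disjoint (A i) (B i) ∧
        A i ∪ B i = Finset.univ) ∧
      ∀ g : Fin k → Fin m, StrictMono g → ∀ W : Fin k → Finset (Fin N),
        (∀ j, W j = A (g j) ∨ W j = B (g j)) →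
        (⋂ j, (↑(W j) : Set (Fin N))).Nonempty := by
  obtain ⟨e⟩ := nonempty_embedding_of_choose_mul_two_pow_le (ι := Fin m) (X := Fin N) (k := k)
    (by simpa using hkm) (by simpa using hN)
  obtain ⟨A, B, hAB, hW⟩ := set_pairs_construction_general (by omega) e
  lift A to Fin m → Finset (Fin N) using fun i => (A i).toFinite
  lift B to Fin m → Finset (Fin N) using fun i => (B i).toFinite
  beta_reduce at hAB hW
  exact ⟨A, B, by exact_mod_cast hAB,
    fun g hg W h => hW g hg.injective (fun j => W j) (by exact_mod_cast h)⟩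
end
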